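/- arXiv:2402.18290 — 5 statements merged into one kernel-verified Lean document; each statement's English description precedes it below -/
import Mathlib

section
/- Let V be a finitely generated free ℤ-module and let λ : V × V → ℤ be a nondegenerate symmetric bilinear form with adjoint λ̂ : V → Hom(V,ℤ). Then for every x ∈ Hom(V,ℤ) there exist s ∈ ℤ \ {0} and z ∈ V with s·x = λ̂(z); moreover the assignment ([x],[y]) ↦ (1/s)·y(z) mod ℤ is independent of the choices of s and z and of the representatives x, y of the classes [x],[y] ∈ coker(λ̂), and it defines a symmetric bilinear form ∂λ : coker(λ̂) × coker(λ̂) → ℚ/ℤ. -/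
/-!
Over the fraction field `K` of `R` a nondegenerate form becomes an isomorphism of `K ⊗ V` with its
dual, so `Hom(V, R)` embeds in `K ⊗ V`: a functional `x` with `s • x = λ̂ z` goes to `s⁻¹ ⊗ z`.
Clearing denominators in `K ⊗ V` gives the existence of `s` and `z`. Restricting the form on
`K ⊗ V` to `Hom(V, R)` gives a symmetric pairing `(x, y) ↦ s⁻¹ y(z)` that depends on no choices and
takes values in `R` as soon as one argument lies in the image of `λ̂`. Modulo `R` it therefore
descends to the cokernel.
-/

open LinearMap (range BilinForm)
open Module TensorProduct
open scoped nonZeroDivisors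

theorem separatingLeft_baseChange {R A V : Type*} [CommRing R] [CommRing A] [Algebra R A]
    [FaithfulSMul R A] (S : Submonoid R) [IsLocalization S A] [AddCommGroup V] [Module R V]
    {B : BilinForm R V} (hB : B.SeparatingLeft) :
    (BilinForm.baseChange A B).SeparatingLeft := by
  intro w hw
  obtain ⟨⟨z, s⟩, hz : (s : R) • w = 1 ⊗ₜ z⟩ :=
    IsLocalizedModule.surj S (TensorProduct.mk R A V 1) w
  have hBz (v : V) : B z v = 0 := by
    refine FaithfulSMul.algebraMap_injective R A ?_
    calc algebraMap R A (B z v) = BilinForm.baseChange A B (1 ⊗ₜ z) (1 ⊗ₜ v) := by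
          simp [Algebra.algebraMap_eq_smul_one]
      _ = algebraMap R A 0 := by
          rw [← hz, ← algebraMap_smul A, map_smul, LinearMap.smul_apply, hw, smul_zero, map_zero]
  rw [hB z hBz, tmul_zero] at hz
  exact IsLocalizedModule.smul_injective (TensorProduct.mk R A V 1) s (hz.trans (smul_zero _).symm)

section LinkingForm

variable {R V : Type*} (K : Type*) [CommRing R] [Field K] [Algebra R K] [AddCommGroup V]
  [Module R V] [Module.Finite R V] {B : BilinForm R V}

/-- The map `Hom(V, R) → K ⊗ V` that sends `x` to the vector representing the functional
`K ⊗ x` with respect to the form `K ⊗ B`. -/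
noncomputable def dualToBaseChange (hB : (BilinForm.baseChange K B).Nondegenerate) :
    Dual R V →ₗ[R] K ⊗[R] V :=
  ((BilinForm.baseChange K B).toDual hB).symm.toLinearMap.restrictScalars R ∘ₗ Dual.baseChange K

/-- The form on `Hom(V, R)` inverse to `B`: the pullback of `K ⊗ B` along
`dualToBaseChange`. In coordinates, its Gram matrix is the inverse of that of `B`. -/
noncomputable def inverseForm (hB : (BilinForm.baseChange K B).Nondegenerate) :
    Dual R V →ₗ[R] Dual R V →ₗ[R] K :=
  ((BilinForm.baseChange K B).restrictScalars₁₂ R R).compl₁₂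
    (dualToBaseChange K hB) (dualToBaseChange K hB)

variable {K} (hB : (BilinForm.baseChange K B).Nondegenerate)

theorem baseChange_dualToBaseChange_tmul (x : Dual R V) (a : K) (v : V) :
    BilinForm.baseChange K B (dualToBaseChange K hB x) (a ⊗ₜ v) = x v • a :=
  BilinForm.apply_toDual_symm_apply (hB := hB) (x.baseChange K) (a ⊗ₜ v)

theorem dualToBaseChange_apply_form (z : V) : dualToBaseChange K hB (B z) = 1 ⊗ₜ z := by
  refine (LinearEquiv.symm_apply_eq _).mpr ?_
  ext v
  simp [BilinForm.toDual_def]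

theorem dualToBaseChange_eq_inv_tmul {x : Dual R V} {s : R} {z : V}
    (hs : algebraMap R K s ≠ 0) (hx : s • x = B z) :
    dualToBaseChange K hB x = (algebraMap R K s)⁻¹ ⊗ₜ z := by
  have h : algebraMap R K s • dualToBaseChange K hB x = 1 ⊗ₜ z := by
    rw [algebraMap_smul, ← map_smul, hx, dualToBaseChange_apply_form]
  rw [← inv_smul_smul₀ hs (dualToBaseChange K hB x), h, smul_tmul', smul_eq_mul, mul_one]

theorem exists_smul_eq_of_nondegenerate_baseChange [IsFractionRing R K]
    (hB : (BilinForm.baseChange K B).Nondegenerate) (x : Dual R V) :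
    ∃ s ∈ R⁰, ∃ z, s • x = B z := by
  obtain ⟨⟨z, s⟩, hz : (s : R) • dualToBaseChange K hB x = 1 ⊗ₜ z⟩ :=
    IsLocalizedModule.surj R⁰ (TensorProduct.mk R K V 1) (dualToBaseChange K hB x)
  refine ⟨s, s.2, z, LinearMap.ext fun v ↦ IsFractionRing.injective R K ?_⟩
  rw [← map_smul, ← dualToBaseChange_apply_form hB] at hz
  have h := congrArg (fun w ↦ BilinForm.baseChange K B w (1 ⊗ₜ v)) hz
  simpa only [baseChange_dualToBaseChange_tmul, ← Algebra.algebraMap_eq_smul_one] using h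

theorem inverseForm_comm (hsymm : LinearMap.IsSymm B) (x y : Dual R V) :
    inverseForm K hB x y = inverseForm K hB y x :=
  (BilinForm.IsSymm.baseChange K hsymm).eq _ _

theorem inverseForm_eq_one_div_mul (hsymm : LinearMap.IsSymm B) {x : Dual R V} {s : R} {z : V}
    (hs : algebraMap R K s ≠ 0) (hx : s • x = B z) (y : Dual R V) :
    inverseForm K hB x y = 1 / algebraMap R K s * algebraMap R K (y z) := by
  calc inverseForm K hB x y
      = BilinForm.baseChange K B (dualToBaseChange K hB y) (dualToBaseChange K hB x) :=
        inverseForm_comm hB hsymm x y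
    _ = y z • (algebraMap R K s)⁻¹ := by
        rw [dualToBaseChange_eq_inv_tmul hB hs hx, baseChange_dualToBaseChange_tmul]
    _ = 1 / algebraMap R K s * algebraMap R K (y z) := by
        rw [Algebra.smul_def, one_div, mul_comm]

theorem inverseForm_apply_left (hsymm : LinearMap.IsSymm B) (z : V) (y : Dual R V) :
    inverseForm K hB (B z) y = algebraMap R K (y z) := by
  simpa using inverseForm_eq_one_div_mul hB hsymm (s := 1) (by simp) (one_smul R (B z)) y

variable {Q : Type*} [AddCommGroup Q] [Module R Q] (π : K →ₗ[R] Q)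
  (hπ : ∀ r, π (algebraMap R K r) = 0) (hsymm : LinearMap.IsSymm B)

/-- The boundary linking form `∂B` on the cokernel of `B : V → Hom(V, R)`: the inverse form of `B`
modulo `R`. Instead of `K ⧸ R`, the values are taken in any `R`-module `Q` that receives a map `π`
from `K` vanishing on `R`; for `ℚ ⧸ ℤ`, take `Q = AddCircle (1 : ℚ)`. -/
noncomputable def linkingForm : (Dual R V ⧸ range B) →ₗ[R] (Dual R V ⧸ range B) →ₗ[R] Q :=
  LinearMap.IsRefl.liftQ₂ ((inverseForm K hB).compr₂ π) (range B)
    (fun x y h ↦ (congrArg π (inverseForm_comm hB hsymm y x)).trans h)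
    (by
      rintro _ ⟨z, rfl⟩
      ext y
      rw [LinearMap.compr₂_apply, inverseForm_apply_left hB hsymm, hπ, LinearMap.zero_apply])

theorem linkingForm_mk_mk (x y : Dual R V) :
    linkingForm hB π hπ hsymm (Submodule.Quotient.mk x) (Submodule.Quotient.mk y) =
      π (inverseForm K hB x y) :=
  rfl

theorem linkingForm_comm (ξ η : Dual R V ⧸ range B) :
    linkingForm hB π hπ hsymm ξ η = linkingForm hB π hπ hsymm η ξ := by
  obtain ⟨x, rfl⟩ := Submodule.Quotient.mk_surjective _ ξ
  obtain ⟨y, rfl⟩ := Submodule.Quotient.mk_surjective _ η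
  rw [linkingForm_mk_mk, linkingForm_mk_mk, inverseForm_comm hB hsymm]

end LinkingForm

theorem boundary_linking_form_exists_general {R K V Q : Type*} [CommRing R] [Field K] [Algebra R K]
    [IsFractionRing R K] [AddCommGroup V] [Module R V] [Module.Finite R V] [AddCommGroup Q]
    [Module R Q] (π : K →ₗ[R] Q) (hπ : ∀ r, π (algebraMap R K r) = 0) {B : BilinForm R V}
    (hsymm : LinearMap.IsSymm B) (hnd : B.SeparatingLeft) :
    (∀ x : Dual R V, ∃ s : R, s ≠ 0 ∧ ∃ z : V, s • x = B z) ∧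
    ∃ b : (Dual R V ⧸ range B) →ₗ[R] (Dual R V ⧸ range B) →ₗ[R] Q,
      (∀ (x y : Dual R V) (s : R) (z : V), s ≠ 0 → s • x = B z →
        b (Submodule.Quotient.mk x) (Submodule.Quotient.mk y) =
          π (1 / algebraMap R K s * algebraMap R K (y z))) ∧
      (∀ ξ η, b ξ η = b η ξ) := by
  have : Nontrivial R := (algebraMap R K).domain_nontrivial
  have hK : (BilinForm.baseChange K B).Nondegenerate :=
    (BilinForm.IsSymm.baseChange K hsymm).isRefl.nondegenerate_iff_separatingLeft.mpr
      (separatingLeft_baseChange R⁰ hnd)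
  refine ⟨fun x ↦ ?_, linkingForm hK π hπ hsymm, fun x y s z hs hx ↦ ?_,
    linkingForm_comm hK π hπ hsymm⟩
  · obtain ⟨s, hs, z, hz⟩ := exists_smul_eq_of_nondegenerate_baseChange hK x
    exact ⟨s, nonZeroDivisors.ne_zero hs, z, hz⟩
  · have hsK : algebraMap R K s ≠ 0 := (FaithfulSMul.algebraMap_eq_zero_iff R K).not.mpr hs
    rw [linkingForm_mk_mk, inverseForm_eq_one_div_mul hK hsymm hsK hx]

/-- Let V be a finitely generated free ℤ-module and λ a nondegenerate symmetric bilinear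
form on V, with adjoint λ̂ : V → Hom(V,ℤ), v ↦ λ(v,−) (here `lam` is the adjoint, so
λ(x,y) = lam x y).  Then every x ∈ Hom(V,ℤ) satisfies s • x = λ̂(z) for some s ∈ ℤ \ {0}
and z ∈ V, and ([x],[y]) ↦ (1/s)·y(z) mod ℤ is a well-defined (independent of all choices)
symmetric bilinear form ∂λ : coker(λ̂) × coker(λ̂) → ℚ/ℤ. -/
theorem boundary_linking_form_exists
    (V : Type*) [AddCommGroup V] [Module ℤ V] [Module.Free ℤ V] [Module.Finite ℤ V]
    (lam : V →ₗ[ℤ] Module.Dual ℤ V)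
    (hsymm : ∀ x y : V, lam x y = lam y x)
    (hnd : ∀ x : V, (∀ y : V, lam x y = 0) → x = 0) :
    (∀ x : Module.Dual ℤ V, ∃ s : ℤ, s ≠ 0 ∧ ∃ z : V, s • x = lam z) ∧
    ∃ b : (Module.Dual ℤ V ⧸ LinearMap.range lam) →
        (Module.Dual ℤ V ⧸ LinearMap.range lam) → AddCircle (1 : ℚ),
      (∀ (x y : Module.Dual ℤ V) (s : ℤ) (z : V), s ≠ 0 → s • x = lam z →
        b (Submodule.Quotient.mk x) (Submodule.Quotient.mk y) =
          (((1 / (s : ℚ)) * (y z : ℚ) : ℚ) : AddCircle (1 : ℚ))) ∧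
      (∀ ξ η, b ξ η = b η ξ) ∧
      (∀ ξ η₁ η₂, b ξ (η₁ + η₂) = b ξ η₁ + b ξ η₂) ∧
      (∀ ξ₁ ξ₂ η, b (ξ₁ + ξ₂) η = b ξ₁ η + b ξ₂ η) := by
  obtain ⟨hcoker, b, hb, hb_symm⟩ := boundary_linking_form_exists_general (K := ℚ)
    (QuotientAddGroup.mk' (AddSubgroup.zmultiples (1 : ℚ))).toIntLinearMap
    (fun n ↦ (AddCircle.coe_eq_zero_iff 1).mpr ⟨n, by simp⟩) ⟨hsymm⟩ hnd
  exact ⟨hcoker, (b · ·), hb, hb_symm, fun ξ ↦ map_add (b ξ), b.map_add₂⟩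
end

section
/- Let Q be an n×n integer matrix such that A = Q + Q^T is invertible over ℚ, with rational inverse A^{-1}. Then the map (x,y) ↦ x^T A^{-1} y mod ℤ descends to a well-defined symmetric bilinear form ∂λ : (ℤ^n/Aℤ^n) × (ℤ^n/Aℤ^n) → ℚ/ℤ, the map x ↦ x^T A^{-1} Q A^{-1} x mod ℤ descends to a well-defined map ∂θ : ℤ^n/Aℤ^n → ℚ/ℤ, and these satisfy ∂θ(r·ξ) = r²·∂θ(ξ) for all r ∈ ℤ and ∂θ(ξ+η) − ∂θ(ξ) − ∂θ(η) = ∂λ(ξ,η) for all ξ, η ∈ ℤ^n/Aℤ^n; that is, (ℤ^n/Aℤ^n, ∂λ, ∂θ) is a split quadratic linking form over ℤ. -/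
open Matrix

noncomputable section

/-- The symmetrisation `A = Q + Qᵀ`. -/
def symmMat {n : ℕ} (Q : Matrix (Fin n) (Fin n) ℤ) : Matrix (Fin n) (Fin n) ℤ := Q + Qᵀ

/-- `A = Q + Qᵀ` viewed as a rational matrix. -/
def symmQ {n : ℕ} (Q : Matrix (Fin n) (Fin n) ℤ) : Matrix (Fin n) (Fin n) ℚ :=
  (symmMat Q).map (Int.cast)

/-- The quotient `ℤⁿ/Aℤⁿ` for `A = Q + Qᵀ`. -/
abbrev CokerOf {n : ℕ} (Q : Matrix (Fin n) (Fin n) ℤ) :=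
  (Fin n → ℤ) ⧸ LinearMap.range ((symmMat Q).mulVecLin)

def mkOf {n : ℕ} (Q : Matrix (Fin n) (Fin n) ℤ) (x : Fin n → ℤ) : CokerOf Q :=
  Submodule.Quotient.mk x

def rat {n : ℕ} (x : Fin n → ℤ) : Fin n → ℚ := fun i => (x i : ℚ)

/-!
Write `A = Q + Qᵀ` and let `q x = xᵀ A⁻¹ Q A⁻¹ x`. The polar form of `q` has matrix
`A⁻¹ Q A⁻¹ + (A⁻¹ Q A⁻¹)ᵀ = A⁻¹ (Q + Qᵀ) A⁻¹ = A⁻¹`, so it takes the value `zᵀ y` at `(A z, y)`,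
and `q (A z) = zᵀ Q z`. Both are integral: modulo integers, the image of `A` lies in the radical
of `q`. Hence `q` descends to a quadratic map on the cokernel of `A`; it is `∂θ`, and its polar
form is `∂λ`.
-/

theorem finite_quotient_range_mulVecLin {ι : Type*} [Fintype ι] [DecidableEq ι]
    {A : Matrix ι ι ℤ} (hA : A.det ≠ 0) :
    Finite ((ι → ℤ) ⧸ LinearMap.range A.mulVecLin) :=
  Submodule.finiteQuotientOfFreeOfRankEq _ <| LinearMap.finrank_range_of_inj <|
    mulVec_injective_of_det_mem_nonZeroDivisors (mem_nonZeroDivisors_of_ne_zero hA)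

section Lattice

variable {ι R K P : Type*} [Fintype ι] [CommRing R] [CommRing K] [Algebra R K]
  [AddCommGroup P] [Module R P]

theorem map_algebraMap_eq_zero {π : K →ₗ[R] P} (hπ : π 1 = 0) (r : R) :
    π (algebraMap R K r) = 0 := by
  rw [Algebra.algebraMap_eq_smul_one, map_smul, hπ, smul_zero]

theorem algebraMap_comp_mulVec {κ : Type*} (A : Matrix κ ι R) (z : ι → R) :
    algebraMap R K ∘ (A *ᵥ z) = A.map (algebraMap R K) *ᵥ (algebraMap R K ∘ z) :=
  funext (RingHom.map_mulVec _ A z)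

variable [DecidableEq ι]

theorem inv_map_mulVec_comp_mulVec {A : Matrix ι ι R}
    (hA : IsUnit (A.map (algebraMap R K)).det) (z : ι → R) :
    (A.map (algebraMap R K))⁻¹ *ᵥ (algebraMap R K ∘ (A *ᵥ z)) = algebraMap R K ∘ z := by
  rw [algebraMap_comp_mulVec, mulVec_mulVec, nonsing_inv_mul _ hA, one_mulVec]

theorem toLinearMap₂'_apply_algebraMap {κ : Type*} [Fintype κ] [DecidableEq κ]
    (M : Matrix ι κ K) (x : ι → R) (y : κ → R) :
    toLinearMap₂' R M x y = (algebraMap R K ∘ x) ⬝ᵥ (M *ᵥ (algebraMap R K ∘ y)) := by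
  simp only [toLinearMap₂'_apply, dotProduct, mulVec, Finset.mul_sum, Function.comp_apply,
    Algebra.smul_def, mul_comm (M _ _)]

/-- The quadratic map `x ↦ π (xᵀ M x)` on the lattice `Rⁿ`, for a matrix `M` over an `R`-algebra
`K`. The `R`-linear map `π` plays the role of the projection `ℚ → ℚ/ℤ`. -/
def latticeQuadraticMap (π : K →ₗ[R] P) (M : Matrix ι ι K) : QuadraticMap R (ι → R) P :=
  LinearMap.BilinMap.toQuadraticMap ((toLinearMap₂' R M).compr₂ π)

theorem latticeQuadraticMap_apply (π : K →ₗ[R] P) (M : Matrix ι ι K) (x : ι → R) :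
    latticeQuadraticMap π M x = π ((algebraMap R K ∘ x) ⬝ᵥ (M *ᵥ (algebraMap R K ∘ x))) :=
  congrArg π (toLinearMap₂'_apply_algebraMap M x x)

theorem polar_latticeQuadraticMap (π : K →ₗ[R] P) (M : Matrix ι ι K) (x y : ι → R) :
    QuadraticMap.polar (latticeQuadraticMap π M) x y =
      π ((algebraMap R K ∘ x) ⬝ᵥ ((M + Mᵀ) *ᵥ (algebraMap R K ∘ y))) := by
  simp only [latticeQuadraticMap, LinearMap.BilinMap.polar_toQuadraticMap, LinearMap.compr₂_apply,
    toLinearMap₂'_apply_algebraMap, ← map_add, add_mulVec, dotProduct_add,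
    dotProduct_transpose_mulVec]

end Lattice

section Boundary

variable {ι R K P : Type*} [Fintype ι] [DecidableEq ι] [CommRing R] [CommRing K] [Algebra R K]
  [AddCommGroup P] [Module R P]

variable (K) in
/-- The matrix `A⁻¹ Q A⁻¹` over `K` whose quadratic form induces `∂θ`, where `A = Q + Qᵀ`. It is
meaningful only if `A` becomes invertible over `K`, since otherwise `A⁻¹ = 0`. -/
def boundaryMatrix (Q : Matrix ι ι R) : Matrix ι ι K :=
  ((Q + Qᵀ).map (algebraMap R K))⁻¹ * Q.map (algebraMap R K) * ((Q + Qᵀ).map (algebraMap R K))⁻¹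

theorem transpose_inv_map_add_transpose (Q : Matrix ι ι R) :
    (((Q + Qᵀ).map (algebraMap R K))⁻¹)ᵀ = ((Q + Qᵀ).map (algebraMap R K))⁻¹ :=
  ((isSymm_add_transpose_self Q).map _).inv

variable {Q : Matrix ι ι R}

theorem boundaryMatrix_add_transpose (hA : IsUnit ((Q + Qᵀ).map (algebraMap R K)).det) :
    boundaryMatrix K Q + (boundaryMatrix K Q)ᵀ = ((Q + Qᵀ).map (algebraMap R K))⁻¹ := by
  have hsum : Q.map (algebraMap R K) + (Q.map (algebraMap R K))ᵀ =
      (Q + Qᵀ).map (algebraMap R K) := by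
    rw [Matrix.map_add _ (map_add _), transpose_map]
  rw [boundaryMatrix, transpose_mul, transpose_mul, transpose_inv_map_add_transpose,
    ← Matrix.mul_assoc, ← Matrix.add_mul, ← Matrix.mul_add, hsum, nonsing_inv_mul _ hA,
    Matrix.one_mul]

theorem polar_latticeQuadraticMap_boundaryMatrix
    (hA : IsUnit ((Q + Qᵀ).map (algebraMap R K)).det) (π : K →ₗ[R] P) (x y : ι → R) :
    QuadraticMap.polar (latticeQuadraticMap π (boundaryMatrix K Q)) x y =
      π ((algebraMap R K ∘ x) ⬝ᵥ
        (((Q + Qᵀ).map (algebraMap R K))⁻¹ *ᵥ (algebraMap R K ∘ y))) := by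
  rw [polar_latticeQuadraticMap, boundaryMatrix_add_transpose hA]

theorem dotProduct_boundaryMatrix_mulVec (hA : IsUnit ((Q + Qᵀ).map (algebraMap R K)).det)
    (z : ι → R) :
    (algebraMap R K ∘ ((Q + Qᵀ) *ᵥ z)) ⬝ᵥ
        (boundaryMatrix K Q *ᵥ (algebraMap R K ∘ ((Q + Qᵀ) *ᵥ z))) =
      algebraMap R K (z ⬝ᵥ (Q *ᵥ z)) := by
  rw [boundaryMatrix, ← mulVec_mulVec, ← mulVec_mulVec, inv_map_mulVec_comp_mulVec hA,
    ← algebraMap_comp_mulVec, ← transpose_inv_map_add_transpose, dotProduct_transpose_mulVec,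
    inv_map_mulVec_comp_mulVec hA, ← RingHom.map_dotProduct, dotProduct_comm]

theorem range_mulVecLin_le_radical (hA : IsUnit ((Q + Qᵀ).map (algebraMap R K)).det)
    {π : K →ₗ[R] P} (hπ : π 1 = 0) :
    LinearMap.range (Q + Qᵀ).mulVecLin ≤
      (latticeQuadraticMap π (boundaryMatrix K Q)).radical := by
  rintro _ ⟨z, rfl⟩
  rw [mulVecLin_apply]
  refine ⟨?_, LinearMap.ext fun y => ?_⟩
  · rw [latticeQuadraticMap_apply, dotProduct_boundaryMatrix_mulVec hA, map_algebraMap_eq_zero hπ]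
  · rw [QuadraticMap.polarBilin_apply_apply, QuadraticMap.polar_comm,
      polar_latticeQuadraticMap_boundaryMatrix hA, inv_map_mulVec_comp_mulVec hA,
      ← RingHom.map_dotProduct, map_algebraMap_eq_zero hπ, LinearMap.zero_apply]

/-- The quadratic map `∂θ` on the cokernel of `A = Q + Qᵀ`, with values in an `R`-module `P` to
which `K` maps by `π`, killing the image of `R`. Its polar form is `∂λ`. -/
def boundaryQuadraticMap (hA : IsUnit ((Q + Qᵀ).map (algebraMap R K)).det)
    {π : K →ₗ[R] P} (hπ : π 1 = 0) :
    QuadraticMap R ((ι → R) ⧸ LinearMap.range (Q + Qᵀ).mulVecLin) P :=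
  (latticeQuadraticMap π (boundaryMatrix K Q)).lift _ (range_mulVecLin_le_radical hA hπ)

theorem boundaryQuadraticMap_mk (hA : IsUnit ((Q + Qᵀ).map (algebraMap R K)).det)
    {π : K →ₗ[R] P} (hπ : π 1 = 0) (x : ι → R) :
    boundaryQuadraticMap hA hπ (Submodule.Quotient.mk x) =
      π ((algebraMap R K ∘ x) ⬝ᵥ (boundaryMatrix K Q *ᵥ (algebraMap R K ∘ x))) :=
  latticeQuadraticMap_apply π _ x

theorem polar_boundaryQuadraticMap_mk (hA : IsUnit ((Q + Qᵀ).map (algebraMap R K)).det)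
    {π : K →ₗ[R] P} (hπ : π 1 = 0) (x y : ι → R) :
    QuadraticMap.polar (boundaryQuadraticMap hA hπ) (Submodule.Quotient.mk x)
        (Submodule.Quotient.mk y) =
      π ((algebraMap R K ∘ x) ⬝ᵥ
        (((Q + Qᵀ).map (algebraMap R K))⁻¹ *ᵥ (algebraMap R K ∘ y))) :=
  polar_latticeQuadraticMap_boundaryMatrix hA π x y

end Boundary

theorem boundary_split_quadratic_linking_form_general {ι R K P : Type*} [Fintype ι]
    [DecidableEq ι] [CommRing R] [CommRing K] [Algebra R K] [AddCommGroup P] [Module R P]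
    {Q : Matrix ι ι R} (hA : IsUnit ((Q + Qᵀ).map (algebraMap R K)).det)
    {π : K →ₗ[R] P} (hπ : π 1 = 0) :
    ∃ b : (ι → R) ⧸ LinearMap.range (Q + Qᵀ).mulVecLin →
        (ι → R) ⧸ LinearMap.range (Q + Qᵀ).mulVecLin → P,
      ∃ ν : (ι → R) ⧸ LinearMap.range (Q + Qᵀ).mulVecLin → P,
        (∀ x y : ι → R, b (Submodule.Quotient.mk x) (Submodule.Quotient.mk y) =
          π ((algebraMap R K ∘ x) ⬝ᵥ
            (((Q + Qᵀ).map (algebraMap R K))⁻¹ *ᵥ (algebraMap R K ∘ y)))) ∧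
        (∀ x : ι → R, ν (Submodule.Quotient.mk x) =
          π ((algebraMap R K ∘ x) ⬝ᵥ (boundaryMatrix K Q *ᵥ (algebraMap R K ∘ x)))) ∧
        (∀ ξ η, b ξ η = b η ξ) ∧
        (∀ ξ η₁ η₂, b ξ (η₁ + η₂) = b ξ η₁ + b ξ η₂) ∧
        (∀ ξ₁ ξ₂ η, b (ξ₁ + ξ₂) η = b ξ₁ η + b ξ₂ η) ∧
        (∀ (r : R) ξ, ν (r • ξ) = r ^ 2 • ν ξ) ∧
        (∀ ξ η, ν (ξ + η) - ν ξ - ν η = b ξ η) :=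
  let θ := boundaryQuadraticMap hA hπ
  ⟨QuadraticMap.polar θ, θ, polar_boundaryQuadraticMap_mk hA hπ, boundaryQuadraticMap_mk hA hπ,
    QuadraticMap.polar_comm θ, θ.polar_add_right, θ.polar_add_left,
    fun r ξ => by rw [θ.map_smul, pow_two], fun _ _ => rfl⟩

theorem det_symmMat_ne_zero {n : ℕ} {Q : Matrix (Fin n) (Fin n) ℤ} (hA : (symmQ Q).det ≠ 0) :
    (symmMat Q).det ≠ 0 :=
  fun h => hA (by rw [symmQ, ← Int.cast_det, h, Int.cast_zero])

/-- Let Q be an n×n integer matrix with A = Q + Qᵀ invertible over ℚ.  Then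
(x,y) ↦ xᵀA⁻¹y mod ℤ descends to a well-defined symmetric bilinear form
∂λ : (ℤⁿ/Aℤⁿ) × (ℤⁿ/Aℤⁿ) → ℚ/ℤ, x ↦ xᵀA⁻¹QA⁻¹x mod ℤ descends to a well-defined map
∂θ : ℤⁿ/Aℤⁿ → ℚ/ℤ, and (ℤⁿ/Aℤⁿ, ∂λ, ∂θ) is a split quadratic linking form over ℤ:
the quotient is finite, ∂θ(r·ξ) = r²·∂θ(ξ) and ∂θ(ξ+η) − ∂θ(ξ) − ∂θ(η) = ∂λ(ξ,η). -/
theorem boundary_split_quadratic_linking_form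
    (n : ℕ) (Q : Matrix (Fin n) (Fin n) ℤ) (hA : (symmQ Q).det ≠ 0) :
    Finite (CokerOf Q) ∧
    ∃ b : CokerOf Q → CokerOf Q → AddCircle (1 : ℚ), ∃ ν : CokerOf Q → AddCircle (1 : ℚ),
      (∀ x y : Fin n → ℤ, b (mkOf Q x) (mkOf Q y) =
        ((rat x ⬝ᵥ ((symmQ Q)⁻¹ *ᵥ rat y) : ℚ) : AddCircle (1 : ℚ))) ∧
      (∀ x : Fin n → ℤ, ν (mkOf Q x) =
        ((rat x ⬝ᵥ (((symmQ Q)⁻¹ * Q.map (Int.cast) * (symmQ Q)⁻¹) *ᵥ rat x) : ℚ) :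
          AddCircle (1 : ℚ))) ∧
      (∀ ξ η, b ξ η = b η ξ) ∧
      (∀ ξ η₁ η₂, b ξ (η₁ + η₂) = b ξ η₁ + b ξ η₂) ∧
      (∀ ξ₁ ξ₂ η, b (ξ₁ + ξ₂) η = b ξ₁ η + b ξ₂ η) ∧
      (∀ (r : ℤ) (ξ : CokerOf Q), ν (r • ξ) = (r ^ 2) • ν ξ) ∧
      (∀ ξ η, ν (ξ + η) - ν ξ - ν η = b ξ η) :=
  ⟨finite_quotient_range_mulVecLin (det_symmMat_ne_zero hA),
    boundary_split_quadratic_linking_form_general (Q := Q) (K := ℚ) hA.isUnit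
      (π := (QuotientAddGroup.mk' (AddSubgroup.zmultiples (1 : ℚ))).toIntLinearMap)
      (AddCircle.coe_period 1)⟩
end
end

section
/- For h = 2 there exists a group isomorphism u : ℤ/4 ⊕ ℤ/4 → ℤ²/A₂ℤ² such that for all a, b ∈ ℤ/4 ⊕ ℤ/4 with integer lifts x = (x₁,x₂) and y = (y₁,y₂): ∂λ(u(a),u(b)) = (x₁y₁ + x₂y₂)/4 mod ℤ and ∂θ(u(a)) = (x₁² + x₂²)/8 mod ℤ. -/
open Matrix

noncomputable section

/-- The matrix `Q_h`: first row all `4`; in rows `2,…,h` diagonal and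
above-diagonal entries are `2`, below-diagonal entries are `0`. -/
def Qmat (h : ℕ) : Matrix (Fin h) (Fin h) ℤ :=
  Matrix.of fun i j => if (i : ℕ) = 0 then 4 else if i ≤ j then 2 else 0

/-- `A_h = Q_h + Q_hᵀ`. -/
def Amat (h : ℕ) : Matrix (Fin h) (Fin h) ℤ := Qmat h + (Qmat h)ᵀ

/-- `A_h` viewed as a rational matrix. -/
def AmatQ (h : ℕ) : Matrix (Fin h) (Fin h) ℚ := (Amat h).map (Int.cast)

/-- `Q_h` viewed as a rational matrix. -/
def QmatQ (h : ℕ) : Matrix (Fin h) (Fin h) ℚ := (Qmat h).map (Int.cast)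

/-- The cokernel `ℤ^h / A_h ℤ^h`. -/
abbrev Coker (h : ℕ) := (Fin h → ℤ) ⧸ LinearMap.range ((Amat h).mulVecLin)

/-- The quotient map `ℤ^h → ℤ^h / A_h ℤ^h`. -/
def ckMk {h : ℕ} (x : Fin h → ℤ) : Coker h := Submodule.Quotient.mk x

def ratVec {h : ℕ} (x : Fin h → ℤ) : Fin h → ℚ := fun i => (x i : ℚ)

/-- The boundary linking form `∂λ` computed on representatives:
`x ᵀ A_h⁻¹ y mod ℤ`, valued in `ℚ/ℤ`. -/
def linkR (h : ℕ) (x y : Fin h → ℤ) : AddCircle (1 : ℚ) :=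
  ((ratVec x ⬝ᵥ ((AmatQ h)⁻¹ *ᵥ ratVec y) : ℚ) : AddCircle (1 : ℚ))

/-- The boundary quadratic form `∂θ` computed on representatives:
`xᵀ A_h⁻¹ Q_h A_h⁻¹ x mod ℤ`, valued in `ℚ/ℤ`. -/
def quadR (h : ℕ) (x : Fin h → ℤ) : AddCircle (1 : ℚ) :=
  ((ratVec x ⬝ᵥ (((AmatQ h)⁻¹ * QmatQ h * (AmatQ h)⁻¹) *ᵥ ratVec x) : ℚ) : AddCircle (1 : ℚ))

/-!
If `A = S * diagonal d * Sᵀ` with `S` unimodular, then `x ↦ S *ᵥ x` identifies `∏ ℤ/dᵢ` with the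
cokernel of `A`, and it turns `xᵀ A⁻¹ y` into `∑ xᵢ yᵢ / dᵢ`. When `A = Q + Qᵀ`, the quadratic form
is over `ℚ` half of the linking form, since only the symmetric part of `Q` contributes; it is
well defined modulo `ℤ` because `A` is even: `½ wᵀ A w = wᵀ Q w` is an integer.
Here `A₂ = S * diagonal (4, 4) * Sᵀ` for `S = !![1, 1; 0, 1]`.
-/

variable {ι : Type*}

section MatrixAlgebra

variable [Fintype ι] {R : Type*} [CommRing R]

lemma dotProduct_add_transpose_mulVec_self (Q : Matrix ι ι R) (v : ι → R) :
    v ⬝ᵥ (Q + Qᵀ) *ᵥ v = 2 * (v ⬝ᵥ Q *ᵥ v) := by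
  rw [add_mulVec, dotProduct_add, dotProduct_transpose_mulVec, two_mul]

variable [DecidableEq ι]

lemma inv_mul_mul_inv_add_transpose {Q A : Matrix ι ι R} (hA : IsUnit A.det) (hQ : Q + Qᵀ = A) :
    A⁻¹ * Q * A⁻¹ + (A⁻¹ * Q * A⁻¹)ᵀ = A⁻¹ := by
  have hA_inv : A⁻¹ᵀ = A⁻¹ := by
    rw [transpose_nonsing_inv, ← hQ, (isSymm_add_transpose_self Q).eq]
  rw [transpose_mul, transpose_mul, hA_inv, ← Matrix.mul_assoc, ← Matrix.add_mul,
    ← Matrix.mul_add, hQ, nonsing_inv_mul _ hA, Matrix.one_mul]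

lemma transpose_mul_inv_mul_mul_transpose_mul {S : Matrix ι ι R} (hS : IsUnit S.det)
    (D : Matrix ι ι R) : Sᵀ * (S * D * Sᵀ)⁻¹ * S = D⁻¹ := by
  have hSt : IsUnit Sᵀ.det := by rwa [det_transpose]
  rw [Matrix.mul_inv_rev, Matrix.mul_inv_rev, mul_nonsing_inv_cancel_left _ _ hSt,
    nonsing_inv_mul_cancel_right _ _ hS]

lemma inv_diagonal_of_ne_zero {K : Type*} [Field K] {d : ι → K} (hd : ∀ i, d i ≠ 0) :
    (diagonal d)⁻¹ = diagonal d⁻¹ := by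
  refine inv_eq_right_inv ?_
  rw [diagonal_mul_diagonal, ← diagonal_one]
  exact congrArg diagonal (funext fun i ↦ mul_inv_cancel₀ (hd i))

lemma det_mul_diagonal_mul_transpose_ne_zero [IsDomain R] {S : Matrix ι ι R} (hS : S.det ≠ 0)
    {d : ι → R} (hd : ∀ i, d i ≠ 0) : (S * diagonal d * Sᵀ).det ≠ 0 := by
  rw [det_mul, det_mul, det_transpose, det_diagonal]
  exact mul_ne_zero (mul_ne_zero hS (Finset.prod_ne_zero_iff.2 fun i _ ↦ hd i)) hS

end MatrixAlgebra

section CongruentCokernel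

variable [Fintype ι] [DecidableEq ι] {R : Type*} [CommRing R]

lemma range_mulVecLin_mul_mul {T : Matrix ι ι R} (hT : IsUnit T.det) (S D : Matrix ι ι R) :
    LinearMap.range (S * D * T).mulVecLin = (LinearMap.range D.mulVecLin).map S.mulVecLin := by
  have hT_range : LinearMap.range T.mulVecLin = ⊤ :=
    LinearMap.range_eq_top.2 <| mulVec_surjective_iff_isUnit.2 <| (isUnit_iff_isUnit_det T).2 hT
  rw [mulVecLin_mul, mulVecLin_mul, LinearMap.range_comp_of_range_eq_top _ hT_range,
    LinearMap.range_comp]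

/-- Multiplication by an invertible matrix `S`, as an isomorphism from the cokernel of `D` onto
the cokernel of `A = S * D * Sᵀ`. -/
def cokerCongrEquiv (D : Matrix ι ι R) {S A : Matrix ι ι R} (hS : IsUnit S.det)
    (hA : A = S * D * Sᵀ) :
    ((ι → R) ⧸ LinearMap.range D.mulVecLin) ≃ₗ[R] (ι → R) ⧸ LinearMap.range A.mulVecLin :=
  Submodule.Quotient.equiv _ _ (toLinearEquiv' S (S.invertibleOfIsUnitDet hS)) <| by
    rw [hA, range_mulVecLin_mul_mul (by rwa [det_transpose])]
    rfl

lemma cokerCongrEquiv_mk (D : Matrix ι ι R) {S A : Matrix ι ι R} (hS : IsUnit S.det)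
    (hA : A = S * D * Sᵀ) (x : ι → R) :
    cokerCongrEquiv D hS hA (Submodule.Quotient.mk x) = Submodule.Quotient.mk (S *ᵥ x) :=
  rfl

end CongruentCokernel

section DiagonalCokernel

/-- Reduction of the `i`-th coordinate modulo `d i`. The modulus is written `(d i).natAbs` because
`ZMod` is indexed by `ℕ`. -/
def reduceMod (d : ι → ℤ) : (ι → ℤ) →ₗ[ℤ] ∀ i, ZMod (d i).natAbs :=
  LinearMap.pi fun i ↦ (Int.castAddHom _).toIntLinearMap ∘ₗ LinearMap.proj i

lemma reduceMod_apply (d x : ι → ℤ) : reduceMod d x = fun i ↦ (x i : ZMod (d i).natAbs) :=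
  rfl

lemma reduceMod_surjective (d : ι → ℤ) : Function.Surjective (reduceMod d) := fun a ↦ by
  choose x hx using fun i ↦ ZMod.intCast_surjective (a i)
  exact ⟨x, funext hx⟩

variable [Fintype ι] [DecidableEq ι]

lemma ker_reduceMod (d : ι → ℤ) :
    LinearMap.ker (reduceMod d) = LinearMap.range (diagonal d).mulVecLin := by
  ext x
  simp only [LinearMap.mem_ker, LinearMap.mem_range, reduceMod_apply, funext_iff, Pi.zero_apply,
    ZMod.intCast_zmod_eq_zero_iff_dvd, Int.natAbs_dvd, mulVecLin_apply, mulVec_diagonal]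
  exact ⟨fun h ↦ (Classical.skolem.1 h).imp fun _ hw i ↦ (hw i).symm,
    fun ⟨w, hw⟩ i ↦ ⟨w i, (hw i).symm⟩⟩

/-- The cokernel of `diagonal d` is `∏ ℤ/dᵢ`, by coordinatewise reduction. -/
def cokerDiagonalEquiv (d : ι → ℤ) :
    ((ι → ℤ) ⧸ LinearMap.range (diagonal d).mulVecLin) ≃ₗ[ℤ] ∀ i, ZMod (d i).natAbs :=
  (Submodule.quotEquivOfEq _ _ (ker_reduceMod d).symm).trans
    ((reduceMod d).quotKerEquivOfSurjective (reduceMod_surjective d))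

lemma cokerDiagonalEquiv_symm_intCast (d x : ι → ℤ) :
    (cokerDiagonalEquiv d).symm (fun i ↦ (x i : ZMod (d i).natAbs)) = Submodule.Quotient.mk x :=
  (LinearEquiv.symm_apply_eq _).2 rfl

end DiagonalCokernel

section IntegerRepresentatives

lemma coe_add_intCast (a : ℚ) (n : ℤ) : ((a + n : ℚ) : AddCircle (1 : ℚ)) = a := by
  rw [AddCircle.coe_add, add_eq_left, AddCircle.coe_eq_zero_iff]
  exact ⟨n, zsmul_one n⟩

lemma intCast_comp_add (x y : ι → ℤ) :
    (Int.cast ∘ (x + y) : ι → ℚ) = Int.cast ∘ x + Int.cast ∘ y :=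
  funext fun _ ↦ Int.cast_add _ _

variable [Fintype ι]

lemma intCast_comp_mulVec (A : Matrix ι ι ℤ) (w : ι → ℤ) :
    (Int.cast ∘ (A *ᵥ w) : ι → ℚ) = A.map Int.cast *ᵥ (Int.cast ∘ w) :=
  funext fun i ↦ RingHom.map_mulVec (Int.castRingHom ℚ) A w i

lemma isUnit_det_map_intCast [DecidableEq ι] {A : Matrix ι ι ℤ} (hA : A.det ≠ 0) :
    IsUnit (A.map Int.cast : Matrix ι ι ℚ).det := by
  rw [← Int.cast_det]
  exact (Int.cast_ne_zero.2 hA).isUnit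

lemma exists_eq_add_mulVec_of_smodEq {A : Matrix ι ι ℤ} {x y : ι → ℤ}
    (h : x ≡ y [SMOD LinearMap.range A.mulVecLin]) : ∃ w, x = y + A *ᵥ w := by
  obtain ⟨w, hw⟩ := SModEq.sub_mem.1 h
  exact ⟨w, by rw [← mulVecLin_apply, hw, add_sub_cancel]⟩

end IntegerRepresentatives

section LinkingPairing

variable [Fintype ι] [DecidableEq ι] {A : Matrix ι ι ℤ}

/-- The rational number `xᵀ A⁻¹ y`, whose class modulo `ℤ` is the boundary linking form of `A`. -/
def linkingPairing (A : Matrix ι ι ℤ) (x y : ι → ℤ) : ℚ :=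
  (Int.cast ∘ x) ⬝ᵥ (A.map Int.cast)⁻¹ *ᵥ (Int.cast ∘ y)

lemma linkingPairing_add_right (x y z : ι → ℤ) :
    linkingPairing A x (y + z) = linkingPairing A x y + linkingPairing A x z := by
  rw [linkingPairing, intCast_comp_add, mulVec_add, dotProduct_add, linkingPairing, linkingPairing]

lemma linkingPairing_comm (hA : A.IsSymm) (x y : ι → ℤ) :
    linkingPairing A x y = linkingPairing A y x := by
  rw [linkingPairing, linkingPairing, ← dotProduct_transpose_mulVec, transpose_nonsing_inv,
    (hA.map _).eq]

lemma linkingPairing_mulVec_right (hA : A.det ≠ 0) (x w : ι → ℤ) :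
    linkingPairing A x (A *ᵥ w) = (x ⬝ᵥ w : ℤ) := by
  rw [linkingPairing, intCast_comp_mulVec, mulVec_mulVec,
    nonsing_inv_mul _ (isUnit_det_map_intCast hA), one_mulVec]
  exact (RingHom.map_dotProduct (Int.castRingHom ℚ) x w).symm

lemma coe_linkingPairing_congr_right (hA : A.det ≠ 0) (x : ι → ℤ) {y y' : ι → ℤ}
    (hy : y ≡ y' [SMOD LinearMap.range A.mulVecLin]) :
    (linkingPairing A x y : AddCircle (1 : ℚ)) = linkingPairing A x y' := by
  obtain ⟨w, rfl⟩ := exists_eq_add_mulVec_of_smodEq hy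
  rw [linkingPairing_add_right, linkingPairing_mulVec_right hA, coe_add_intCast]

lemma coe_linkingPairing_congr (hA : A.det ≠ 0) (hA_symm : A.IsSymm) {x x' y y' : ι → ℤ}
    (hx : x ≡ x' [SMOD LinearMap.range A.mulVecLin])
    (hy : y ≡ y' [SMOD LinearMap.range A.mulVecLin]) :
    (linkingPairing A x y : AddCircle (1 : ℚ)) = linkingPairing A x' y' := by
  rw [coe_linkingPairing_congr_right hA x hy, linkingPairing_comm hA_symm,
    coe_linkingPairing_congr_right hA y' hx, linkingPairing_comm hA_symm]

lemma linkingPairing_mulVec_mulVec {S : Matrix ι ι ℤ} (hS : IsUnit S.det) {d : ι → ℤ}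
    (hd : ∀ i, d i ≠ 0) (hA : A = S * diagonal d * Sᵀ) (x y : ι → ℤ) :
    linkingPairing A (S *ᵥ x) (S *ᵥ y) = ∑ i, (x i : ℚ) * y i / d i := by
  let Sq : Matrix ι ι ℚ := S.map Int.cast
  let Dq : Matrix ι ι ℚ := diagonal fun i ↦ (d i : ℚ)
  have hA_map : A.map Int.cast = Sq * Dq * Sqᵀ := by
    rw [hA, map_mul_intCast, map_mul_intCast, diagonal_map Int.cast_zero, transpose_map]
  calc
    linkingPairing A (S *ᵥ x) (S *ᵥ y)
      = (Int.cast ∘ x) ⬝ᵥ (Sqᵀ * (Sq * Dq * Sqᵀ)⁻¹ * Sq) *ᵥ (Int.cast ∘ y) := by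
        rw [linkingPairing, intCast_comp_mulVec, intCast_comp_mulVec, hA_map, ← mulVec_mulVec,
          ← mulVec_mulVec, dotProduct_transpose_mulVec, dotProduct_comm]
    _ = (Int.cast ∘ x) ⬝ᵥ Dq⁻¹ *ᵥ (Int.cast ∘ y) := by
        rw [transpose_mul_inv_mul_mul_transpose_mul (isUnit_det_map_intCast hS.ne_zero)]
    _ = ∑ i, (x i : ℚ) * y i / d i := by
        rw [inv_diagonal_of_ne_zero fun i ↦ Int.cast_ne_zero.2 (hd i)]
        simp only [dotProduct, mulVec_diagonal, Function.comp_apply, Pi.inv_apply]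
        exact Finset.sum_congr rfl fun i _ ↦ by ring

end LinkingPairing

section QuadraticRefinement

variable [Fintype ι] [DecidableEq ι] {Q : Matrix ι ι ℤ}

/-- The rational number `xᵀ A⁻¹ Q A⁻¹ x` for `A = Q + Qᵀ`, whose class modulo `ℤ` is the boundary
quadratic form of `Q`. -/
def quadraticRefinement (Q : Matrix ι ι ℤ) (x : ι → ℤ) : ℚ :=
  (Int.cast ∘ x) ⬝ᵥ
    (((Q + Qᵀ).map Int.cast)⁻¹ * Q.map Int.cast * ((Q + Qᵀ).map Int.cast)⁻¹) *ᵥ (Int.cast ∘ x)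

lemma two_mul_quadraticRefinement (hQ : (Q + Qᵀ).det ≠ 0) (x : ι → ℤ) :
    2 * quadraticRefinement Q x = linkingPairing (Q + Qᵀ) x x := by
  have hQ_map : (Q.map Int.cast + (Q.map Int.cast)ᵀ : Matrix ι ι ℚ) = (Q + Qᵀ).map Int.cast := by
    rw [Matrix.map_add _ Int.cast_add, transpose_map]
  rw [quadraticRefinement, ← dotProduct_add_transpose_mulVec_self,
    inv_mul_mul_inv_add_transpose (isUnit_det_map_intCast hQ) hQ_map, linkingPairing]

lemma quadraticRefinement_add_mulVec (hQ : (Q + Qᵀ).det ≠ 0) (x w : ι → ℤ) :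
    quadraticRefinement Q (x + (Q + Qᵀ) *ᵥ w) =
      quadraticRefinement Q x + (x ⬝ᵥ w + w ⬝ᵥ Q *ᵥ w : ℤ) := by
  have hw : ((Q + Qᵀ) *ᵥ w) ⬝ᵥ w = 2 * (w ⬝ᵥ Q *ᵥ w) := by
    rw [dotProduct_comm, dotProduct_add_transpose_mulVec_self]
  refine mul_left_cancel₀ (two_ne_zero' ℚ) ?_
  rw [mul_add, two_mul_quadraticRefinement hQ, two_mul_quadraticRefinement hQ,
    linkingPairing_add_right, linkingPairing_mulVec_right hQ,
    linkingPairing_comm (isSymm_add_transpose_self Q), linkingPairing_add_right,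
    linkingPairing_mulVec_right hQ, add_dotProduct, hw]
  push_cast
  ring

lemma coe_quadraticRefinement_congr (hQ : (Q + Qᵀ).det ≠ 0) {x x' : ι → ℤ}
    (hx : x ≡ x' [SMOD LinearMap.range (Q + Qᵀ).mulVecLin]) :
    (quadraticRefinement Q x : AddCircle (1 : ℚ)) = quadraticRefinement Q x' := by
  obtain ⟨w, rfl⟩ := exists_eq_add_mulVec_of_smodEq hx
  rw [quadraticRefinement_add_mulVec hQ, coe_add_intCast]

lemma quadraticRefinement_mulVec {S : Matrix ι ι ℤ} (hS : IsUnit S.det) {d : ι → ℤ}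
    (hd : ∀ i, d i ≠ 0) (hQ : Q + Qᵀ = S * diagonal d * Sᵀ) (x : ι → ℤ) :
    quadraticRefinement Q (S *ᵥ x) = ∑ i, (x i : ℚ) ^ 2 / (2 * d i) := by
  have hQ_det : (Q + Qᵀ).det ≠ 0 := hQ ▸ det_mul_diagonal_mul_transpose_ne_zero hS.ne_zero hd
  refine mul_left_cancel₀ (two_ne_zero' ℚ) ?_
  rw [two_mul_quadraticRefinement hQ_det, linkingPairing_mulVec_mulVec hS hd hQ, Finset.mul_sum]
  exact Finset.sum_congr rfl fun i _ ↦ by ring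

end QuadraticRefinement

theorem boundary_forms_h2_general [Fintype ι] [DecidableEq ι] {Q S : Matrix ι ι ℤ} {d : ι → ℤ}
    (hS : IsUnit S.det) (hd : ∀ i, d i ≠ 0) (hQ : Q + Qᵀ = S * diagonal d * Sᵀ) :
    ∃ u : (∀ i, ZMod (d i).natAbs) ≃+ (ι → ℤ) ⧸ LinearMap.range (Q + Qᵀ).mulVecLin,
      ∀ x y x' y' : ι → ℤ,
        Submodule.Quotient.mk x' = u (fun i ↦ (x i : ZMod (d i).natAbs)) →
        Submodule.Quotient.mk y' = u (fun i ↦ (y i : ZMod (d i).natAbs)) →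
        (linkingPairing (Q + Qᵀ) x' y' : AddCircle (1 : ℚ)) =
          ((∑ i, (x i : ℚ) * y i / d i : ℚ) : AddCircle (1 : ℚ)) ∧
        (quadraticRefinement Q x' : AddCircle (1 : ℚ)) =
          ((∑ i, (x i : ℚ) ^ 2 / (2 * d i) : ℚ) : AddCircle (1 : ℚ)) := by
  have hQ_det : (Q + Qᵀ).det ≠ 0 := hQ ▸ det_mul_diagonal_mul_transpose_ne_zero hS.ne_zero hd
  let u := (cokerDiagonalEquiv d).symm.trans (cokerCongrEquiv _ hS hQ)
  have hu (x : ι → ℤ) : u (fun i ↦ (x i : ZMod (d i).natAbs)) = Submodule.Quotient.mk (S *ᵥ x) := by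
    rw [LinearEquiv.trans_apply, cokerDiagonalEquiv_symm_intCast, cokerCongrEquiv_mk]
  refine ⟨u.toAddEquiv, fun x y x' y' hx hy ↦ ⟨?_, ?_⟩⟩
  · rw [coe_linkingPairing_congr hQ_det (isSymm_add_transpose_self Q) (hx.trans (hu x))
      (hy.trans (hu y)), linkingPairing_mulVec_mulVec hS hd hQ]
  · rw [coe_quadraticRefinement_congr hQ_det (hx.trans (hu x)),
      quadraticRefinement_mulVec hS hd hQ]

lemma Qmat_two_add_transpose :
    Qmat 2 + (Qmat 2)ᵀ = !![1, 1; 0, 1] * diagonal (fun _ ↦ 4) * !![1, 1; 0, 1]ᵀ := by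
  decide

/-- For h = 2 there is a group isomorphism u : ℤ/4 ⊕ ℤ/4 → ℤ²/A₂ℤ² identifying the
boundary linking form with ((x₁y₁ + x₂y₂)/4 mod ℤ) and the boundary quadratic form with
((x₁² + x₂²)/8 mod ℤ), computed from integer lifts x, y of the arguments. -/
theorem boundary_forms_h2 :
    ∃ u : (ZMod 4 × ZMod 4) ≃+ Coker 2,
      ∀ x y x' y' : Fin 2 → ℤ,
        ckMk x' = u ((x 0 : ZMod 4), (x 1 : ZMod 4)) →
        ckMk y' = u ((y 0 : ZMod 4), (y 1 : ZMod 4)) →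
        linkR 2 x' y' =
          ((((x 0 : ℚ) * (y 0 : ℚ) + (x 1 : ℚ) * (y 1 : ℚ)) / 4 : ℚ) : AddCircle (1 : ℚ)) ∧
        quadR 2 x' =
          ((((x 0 : ℚ) ^ 2 + (x 1 : ℚ) ^ 2) / 8 : ℚ) : AddCircle (1 : ℚ)) := by
  obtain ⟨u, hu⟩ := boundary_forms_h2_general (by simp) (fun _ ↦ four_ne_zero)
    Qmat_two_add_transpose
  let e := (LinearEquiv.finTwoArrow ℤ (ZMod 4)).symm.toAddEquiv
  have he (x : Fin 2 → ℤ) : e ((x 0 : ZMod 4), (x 1 : ZMod 4)) = fun i ↦ (x i : ZMod 4) :=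
    (LinearEquiv.symm_apply_eq _).2 rfl
  refine ⟨e.trans u, fun x y x' y' hx hy ↦ ?_⟩
  obtain ⟨hlink, hquad⟩ :=
    hu x y x' y' (hx.trans (congrArg u (he x))) (hy.trans (congrArg u (he y)))
  exact ⟨hlink.trans (by norm_num [Fin.sum_univ_two, add_div]),
    hquad.trans (by norm_num [Fin.sum_univ_two, add_div])⟩
end
end

section
/- For h = 3, the group {P ∈ GL₃(ℤ) : P^T A₃ P = A₃} of isometries of the symmetric bilinear form represented by A₃ = Q₃ + Q₃^T is finite of order 48. -/
open Matrix

noncomputable section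

/-!
The matrix `½ A_h` is the Gram matrix of the basis `e₀ + e_j` (`2 e₀` for `j = 0`) of the lattice
`D_h` of integer vectors with even coordinate sum, so the isometries of `A_h` are the automorphisms
of `D_h`. Orthogonal integer matrices preserve `D_h`, since the coordinate sum of an integer vector
has the parity of its norm. Conversely, if `T` is twice the orthogonal matrix of an automorphism of
`D_h`, then every row of `T` is an integer vector of norm `4` whose entries all have the same
parity. Odd squares are positive and `1` modulo `8`, so odd entries force `h = 4`; otherwise `T / 2`
is an orthogonal integer matrix. There are `2 ^ h * h!` of those, namely the signed permutation
matrices.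
-/

section NonzeroDeterminant

variable {ι R : Type*} [Fintype ι] [DecidableEq ι] [CommRing R] [IsDomain R]

lemma isRegular_of_det_ne_zero {M : Matrix ι ι R} (hM : M.det ≠ 0) : IsRegular M :=
  isRegular_of_isLeftRegular_det (IsRegular.of_ne_zero hM).left

lemma mul_eq_smul_one_symm {M N : Matrix ι ι R} {c : R} (hc : c ≠ 0) (h : M * N = c • 1) :
    N * M = c • 1 := by
  have hdet : M.det * N.det ≠ 0 := by
    rw [← det_mul, h, det_smul, det_one, mul_one]
    exact pow_ne_zero _ hc
  apply (isRegular_of_det_ne_zero (left_ne_zero_of_mul hdet)).left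
  calc M * (N * M) = (M * N) * M := (Matrix.mul_assoc _ _ _).symm
    _ = M * c • 1 := by
        rw [h, Matrix.smul_mul, Matrix.mul_smul, Matrix.one_mul, Matrix.mul_one]

lemma isUnit_det_of_transpose_mul_mul_eq {A P : Matrix ι ι R} (hA : A.det ≠ 0)
    (h : Pᵀ * A * P = A) : IsUnit P.det := by
  have hdet : P.det * A.det * P.det = A.det := by
    simpa only [det_mul, det_transpose] using congrArg det h
  exact IsUnit.of_mul_eq_one P.det (mul_right_cancel₀ hA (by linear_combination hdet))

lemma transpose_mul_gram_mul_eq_iff {B P S : Matrix ι ι R} (hB : B.det ≠ 0)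
    (hSP : S * B = B * P) : Pᵀ * (Bᵀ * B) * P = Bᵀ * B ↔ S ∈ orthogonalGroup ι R := by
  have hgram : Pᵀ * (Bᵀ * B) * P = Bᵀ * (Sᵀ * S * B) := by
    calc Pᵀ * (Bᵀ * B) * P = (B * P)ᵀ * (B * P) := by
          simp only [transpose_mul, Matrix.mul_assoc]
      _ = Bᵀ * (Sᵀ * S * B) := by
          simp only [← hSP, transpose_mul, Matrix.mul_assoc]
  have hBt : Bᵀ.det ≠ 0 := by rwa [det_transpose]
  rw [hgram, (isRegular_of_det_ne_zero hBt).left.eq_iff, mem_orthogonalGroup_iff',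
    ← (isRegular_of_det_ne_zero hB).right.eq_iff (a := Sᵀ * S), Matrix.one_mul]

end NonzeroDeterminant

section IntegerVectors

variable {ι : Type*} [Fintype ι]

lemma even_dotProduct_self_iff (v : ι → ℤ) : Even (v ⬝ᵥ v) ↔ Even (∑ i, v i) := by
  rw [← Int.even_sub, dotProduct, ← Finset.sum_sub_distrib]
  exact Finset.even_sum _ fun i _ => by simpa [mul_sub] using Int.even_mul_pred_self (v i)

lemma exists_eq_single_of_dotProduct_self_eq_one [DecidableEq ι] {v : ι → ℤ} (hv : v ⬝ᵥ v = 1) :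
    ∃ (j : ι) (u : ℤˣ), v = Pi.single j (u : ℤ) := by
  obtain ⟨j, hj⟩ : ∃ j, v j ≠ 0 := by
    by_contra! h
    simp [dotProduct, h] at hv
  have hsum : v j * v j + ∑ i ∈ Finset.univ.erase j, v i * v i = 1 := by
    rwa [Finset.add_sum_erase _ (fun i => v i * v i) (Finset.mem_univ j)]
  have hrest_nonneg : 0 ≤ ∑ i ∈ Finset.univ.erase j, v i * v i :=
    Finset.sum_nonneg fun i _ => mul_self_nonneg (v i)
  have hpos : 0 < v j * v j := mul_self_pos.2 hj
  have hrest : ∀ i ∈ Finset.univ.erase j, v i = 0 :=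
    (Finset.sum_mul_self_eq_zero_iff _ _).1 (by linarith [Int.add_one_le_iff.2 hpos])
  have hunit : v j * v j = 1 := by linarith [Int.add_one_le_iff.2 hpos]
  refine ⟨j, Units.mkOfMulEqOne _ _ hunit, funext fun i => ?_⟩
  rcases eq_or_ne i j with rfl | hij
  · simp
  · simp [hij, hrest]

lemma even_of_dotProduct_self_eq_four (hι : Fintype.card ι ≠ 4) {v : ι → ℤ} (hv : v ⬝ᵥ v = 4)
    (hpar : ∀ i j, Even (v i) ↔ Even (v j)) (i : ι) : Even (v i) := by
  by_contra hi
  have hodd (j : ι) : Odd (v j) := Int.not_even_iff_odd.1 fun hj => hi ((hpar i j).2 hj)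
  have hsum : ∑ j, (v j ^ 2 - 1) = 4 - (Fintype.card ι : ℤ) := by
    simp [← hv, dotProduct, sq]
  have hdvd : (8 : ℤ) ∣ ∑ j, (v j ^ 2 - 1) :=
    Finset.dvd_sum fun j _ => Int.eight_dvd_sq_sub_one_of_odd (hodd j)
  have hne (j : ι) : v j ≠ 0 := by
    intro hj
    simpa [hj] using hodd j
  have hnonneg : 0 ≤ ∑ j, (v j ^ 2 - 1) :=
    Finset.sum_nonneg fun j _ =>
      sub_nonneg.2 (Int.add_one_le_iff.2 (sq_pos_of_ne_zero (hne j)))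
  lia

lemma exists_eq_two_smul_of_transpose_mul_self_eq_four [DecidableEq ι] (hι : Fintype.card ι ≠ 4)
    {T : Matrix ι ι ℤ} (hT : Tᵀ * T = (4 : ℤ) • 1)
    (hpar : ∀ i j k, Even (T i j) ↔ Even (T i k)) : ∃ S : Matrix ι ι ℤ, T = (2 : ℤ) • S := by
  have hrow (i : ι) : T i ⬝ᵥ T i = 4 := by
    calc T i ⬝ᵥ T i = (T * Tᵀ) i i := rfl
      _ = 4 := by simp [mul_eq_smul_one_symm four_ne_zero hT]
  choose S hS using fun i j => (even_of_dotProduct_self_eq_four hι (hrow i) (hpar i) j).two_dvd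
  exact ⟨Matrix.of S, by ext i j; simp [hS]⟩

end IntegerVectors

section SignedPermutations

variable {ι : Type*} [DecidableEq ι]

/-- The signed permutation matrix with entry `ε i` in position `(i, σ i)`; signed permutations are
encoded as pairs of a sign vector and a permutation. -/
def signedPermMatrix (s : (ι → ℤˣ) × Equiv.Perm ι) : Matrix ι ι ℤ :=
  Matrix.of fun i => Pi.single (s.2 i) (s.1 i : ℤ)

lemma signedPermMatrix_injective :
    Function.Injective (signedPermMatrix : (ι → ℤˣ) × Equiv.Perm ι → Matrix ι ι ℤ) := by
  rintro ⟨ε, σ⟩ ⟨δ, τ⟩ h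
  have hrow (i : ι) : (Pi.single (σ i) (ε i : ℤ) : ι → ℤ) = Pi.single (τ i) (δ i : ℤ) :=
    congrFun h i
  have hστ (i : ι) : σ i = τ i := by
    by_contra hne
    simpa [hne] using congrFun (hrow i) (σ i)
  have hεδ (i : ι) : ε i = δ i := by
    simpa [hστ, Units.ext_iff] using congrFun (hrow i) (σ i)
  exact Prod.ext (funext hεδ) (Equiv.ext hστ)

variable [Fintype ι]

lemma signedPermMatrix_mem_orthogonalGroup (s : (ι → ℤˣ) × Equiv.Perm ι) :
    signedPermMatrix s ∈ orthogonalGroup ι ℤ := by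
  rw [mem_orthogonalGroup_iff]
  ext i j
  rcases eq_or_ne i j with rfl | hij
  · simp [signedPermMatrix, mul_apply']
  · simp [signedPermMatrix, mul_apply', hij]

lemma exists_signedPermMatrix_eq {S : Matrix ι ι ℤ} (hS : S ∈ orthogonalGroup ι ℤ) :
    ∃ s, signedPermMatrix s = S := by
  rw [mem_orthogonalGroup_iff] at hS
  have hrows (i j : ι) : S i ⬝ᵥ S j = (1 : Matrix ι ι ℤ) i j := congrFun (congrFun hS i) j
  choose σ ε hσε using fun i =>
    exists_eq_single_of_dotProduct_self_eq_one ((hrows i i).trans (one_apply_eq i))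
  have hσ : Function.Injective σ := by
    intro i j hij
    by_contra hne
    simpa [hσε, hij, hne] using hrows i j
  exact ⟨⟨ε, Equiv.ofBijective σ (Finite.injective_iff_bijective.1 hσ)⟩,
    funext fun i => (hσε i).symm⟩

theorem ncard_orthogonalGroup_int :
    (orthogonalGroup ι ℤ : Set (Matrix ι ι ℤ)).ncard =
      2 ^ Fintype.card ι * (Fintype.card ι).factorial := by
  have hrange : (orthogonalGroup ι ℤ : Set (Matrix ι ι ℤ)) = Set.range signedPermMatrix := by
    ext S
    refine ⟨exists_signedPermMatrix_eq, ?_⟩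
    rintro ⟨s, rfl⟩
    exact signedPermMatrix_mem_orthogonalGroup s
  rw [hrange, ← Set.image_univ, Set.ncard_image_of_injective _ signedPermMatrix_injective,
    Set.ncard_univ, Nat.card_eq_fintype_card]
  simp [Fintype.card_perm]

end SignedPermutations

section CheckerboardLattice

variable {ι : Type*} [Fintype ι] [DecidableEq ι]

/-- The matrix whose columns `e_{i₀} + e_j` form a basis of the checkerboard lattice `D_ι`, the
integer vectors with even coordinate sum; the column at `j = i₀` is `2 e_{i₀}`. -/
def checkerboardBasis (i₀ : ι) : Matrix ι ι ℤ :=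
  1 + vecMulVec (Pi.single i₀ 1) 1

lemma det_checkerboardBasis (i₀ : ι) : (checkerboardBasis i₀).det = 2 := by
  rw [checkerboardBasis, vecMulVec_eq Unit, det_one_add_replicateCol_mul_replicateRow]
  simp

lemma checkerboardBasis_mulVec (i₀ : ι) (v : ι → ℤ) :
    checkerboardBasis i₀ *ᵥ v = v + Pi.single i₀ (∑ i, v i) := by
  rw [checkerboardBasis, add_mulVec, one_mulVec, vecMulVec_mulVec]
  ext i
  simp [Pi.single_apply, one_dotProduct]

lemma mul_checkerboardBasis_apply (i₀ : ι) (T : Matrix ι ι ℤ) (i j : ι) :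
    (T * checkerboardBasis i₀) i j = T i j + T i i₀ := by
  rw [checkerboardBasis, Matrix.mul_add, Matrix.mul_one, mul_vecMulVec]
  simp

lemma transpose_mul_self_checkerboardBasis_apply (i₀ i j : ι) :
    ((checkerboardBasis i₀)ᵀ * checkerboardBasis i₀) i j =
      (if i = j then 1 else 0) + (if i = i₀ then 1 else 0) + (if j = i₀ then 1 else 0) + 1 := by
  rw [mul_checkerboardBasis_apply]
  simp only [checkerboardBasis, vecMulVec_one, transpose_apply, Matrix.add_apply, one_apply,
    replicateCol_apply, Pi.single_apply]
  grind

lemma exists_checkerboardBasis_mulVec_eq (i₀ : ι) {v : ι → ℤ} (hv : Even (∑ i, v i)) :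
    ∃ w, checkerboardBasis i₀ *ᵥ w = v := by
  obtain ⟨k, hk⟩ := hv
  refine ⟨v - Pi.single i₀ k, ?_⟩
  simp [checkerboardBasis_mulVec, hk]

lemma exists_checkerboardBasis_mul_eq_of_mem_orthogonalGroup (i₀ : ι) {S : Matrix ι ι ℤ}
    (hS : S ∈ orthogonalGroup ι ℤ) :
    ∃ P, S * checkerboardBasis i₀ = checkerboardBasis i₀ * P := by
  set B := checkerboardBasis i₀
  have hgram : (S * B)ᵀ * (S * B) = Bᵀ * B := by
    rw [transpose_mul, Matrix.mul_assoc, ← Matrix.mul_assoc Sᵀ,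
      (mem_orthogonalGroup_iff' ..).1 hS, Matrix.one_mul]
  have hnorm (j : ι) : Even ((S * B).col j ⬝ᵥ (S * B).col j) := by
    have : (S * B).col j ⬝ᵥ (S * B).col j = (Bᵀ * B) j j := congrFun (congrFun hgram j) j
    rw [this, transpose_mul_self_checkerboardBasis_apply]
    grind
  choose w hw using fun j =>
    exists_checkerboardBasis_mulVec_eq i₀ ((even_dotProduct_self_iff _).1 (hnorm j))
  refine ⟨(Matrix.of w)ᵀ, ?_⟩
  ext i j
  exact (congrFun (hw j) i).symm

lemma exists_mul_checkerboardBasis_eq_of_isometry (hι : Fintype.card ι ≠ 4) (i₀ : ι)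
    {P : Matrix ι ι ℤ}
    (hP : Pᵀ * ((checkerboardBasis i₀)ᵀ * checkerboardBasis i₀) * P =
      (checkerboardBasis i₀)ᵀ * checkerboardBasis i₀) :
    ∃ S, S * checkerboardBasis i₀ = checkerboardBasis i₀ * P := by
  set B := checkerboardBasis i₀
  -- Since `det B = 2`, this is `2 B P B⁻¹` without denominators.
  set T := B * P * B.adjugate
  have hadj : B * B.adjugate = (2 : ℤ) • 1 := by
    rw [mul_adjugate, det_checkerboardBasis]
  have hTB : T * B = (2 : ℤ) • (B * P) := by
    rw [Matrix.mul_assoc, adjugate_mul, det_checkerboardBasis, Matrix.mul_smul, Matrix.mul_one]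
  have hTtT : Tᵀ * T = (4 : ℤ) • 1 := by
    calc Tᵀ * T = B.adjugateᵀ * (Pᵀ * (Bᵀ * B) * P) * B.adjugate := by
          simp only [T, transpose_mul, Matrix.mul_assoc]
      _ = (B * B.adjugate)ᵀ * (B * B.adjugate) := by
          simp only [hP, transpose_mul, Matrix.mul_assoc]
      _ = (4 : ℤ) • 1 := by
          rw [hadj, transpose_smul, transpose_one, Matrix.smul_mul, Matrix.one_mul, smul_smul]
          norm_num
  have hpar (i j : ι) : Even (T i j) ↔ Even (T i i₀) := by
    rw [← Int.even_add, ← mul_checkerboardBasis_apply, hTB]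
    exact ⟨(B * P) i j, two_mul _⟩
  obtain ⟨S, hTS⟩ := exists_eq_two_smul_of_transpose_mul_self_eq_four hι hTtT
    fun i j k => (hpar i j).trans (hpar i k).symm
  refine ⟨S, smul_right_injective _ (two_ne_zero (α := ℤ)) ?_⟩
  change (2 : ℤ) • (S * B) = (2 : ℤ) • (B * P)
  rw [← Matrix.smul_mul, ← hTS, hTB]

theorem ncard_isometry_gram_checkerboardBasis (hι : Fintype.card ι ≠ 4) (i₀ : ι) :
    {P | Pᵀ * ((checkerboardBasis i₀)ᵀ * checkerboardBasis i₀) * P =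
      (checkerboardBasis i₀)ᵀ * checkerboardBasis i₀}.ncard =
      2 ^ Fintype.card ι * (Fintype.card ι).factorial := by
  set B := checkerboardBasis i₀
  have hdet : B.det ≠ 0 := by simp [B, det_checkerboardBasis]
  have himage : (B * ·) '' {P | Pᵀ * (Bᵀ * B) * P = Bᵀ * B} =
      (· * B) '' (orthogonalGroup ι ℤ : Set (Matrix ι ι ℤ)) := by
    ext M
    constructor
    · rintro ⟨P, hP, rfl⟩
      obtain ⟨S, hSP⟩ := exists_mul_checkerboardBasis_eq_of_isometry hι i₀ hP
      exact ⟨S, (transpose_mul_gram_mul_eq_iff hdet hSP).1 hP, hSP⟩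
    · rintro ⟨S, hS, rfl⟩
      obtain ⟨P, hSP⟩ := exists_checkerboardBasis_mul_eq_of_mem_orthogonalGroup i₀ hS
      exact ⟨P, (transpose_mul_gram_mul_eq_iff hdet hSP).2 hS, hSP.symm⟩
  rw [← Set.ncard_image_of_injective _ (isRegular_of_det_ne_zero hdet).left, himage,
    Set.ncard_image_of_injective _ (isRegular_of_det_ne_zero hdet).right,
    ncard_orthogonalGroup_int]

end CheckerboardLattice

lemma Amat_eq_two_smul_gram (h : ℕ) [NeZero h] :
    Amat h = (2 : ℤ) • ((checkerboardBasis (0 : Fin h))ᵀ * checkerboardBasis 0) := by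
  ext i j
  rw [Matrix.smul_apply, transpose_mul_self_checkerboardBasis_apply]
  simp only [Amat, Qmat, Matrix.add_apply, transpose_apply, of_apply, Fin.val_eq_zero_iff,
    smul_eq_mul]
  grind

lemma det_Amat_ne_zero (h : ℕ) [NeZero h] : (Amat h).det ≠ 0 := by
  rw [Amat_eq_two_smul_gram, det_smul, det_mul, det_transpose, det_checkerboardBasis]
  positivity

theorem isometry_group_order_h3_general (h : ℕ) (h_ne_four : h ≠ 4) :
    Nat.card {P : Matrix (Fin h) (Fin h) ℤ // IsUnit P.det ∧ Pᵀ * Amat h * P = Amat h} =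
      2 ^ h * h.factorial := by
  rcases eq_zero_or_neZero h with rfl | _
  · simp [Subsingleton.elim _ (Amat 0)]
  set G := (checkerboardBasis (0 : Fin h))ᵀ * checkerboardBasis 0
  have hisom (P : Matrix (Fin h) (Fin h) ℤ) :
      IsUnit P.det ∧ Pᵀ * Amat h * P = Amat h ↔ Pᵀ * G * P = G := by
    rw [and_iff_right_of_imp (isUnit_det_of_transpose_mul_mul_eq (det_Amat_ne_zero h)),
      Amat_eq_two_smul_gram, Matrix.mul_smul, Matrix.smul_mul]
    exact (smul_right_injective _ (two_ne_zero (α := ℤ))).eq_iff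
  simp only [hisom]
  simpa only [← Nat.card_coe_set_eq, Set.coe_ofPred, Fintype.card_fin] using
    ncard_isometry_gram_checkerboardBasis (by rwa [Fintype.card_fin]) (0 : Fin h)

/-- For h = 3, the group of isometries of the symmetric bilinear form represented by
A_3 = Q_3 + Q_3ᵀ, i.e. {P ∈ GL_3(ℤ) : Pᵀ A_3 P = A_3}, is finite of order 48. -/
theorem isometry_group_order_h3 :
    Nat.card {P : Matrix (Fin 3) (Fin 3) ℤ // IsUnit P.det ∧ Pᵀ * Amat 3 * P = Amat 3} =
      48 := by
  simpa [Nat.factorial] using isometry_group_order_h3_general 3 (by norm_num)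
end
end

section
/- For h = 3, the boundary map ∂ is surjective onto the automorphisms of the boundary forms: for every group automorphism φ of ℤ³/A₃ℤ³ satisfying ∂λ(φ(ξ),φ(η)) = ∂λ(ξ,η) and ∂θ(φ(ξ)) = ∂θ(ξ) for all ξ, η, there exists P ∈ GL₃(ℤ) with P^T A₃ P = A₃ such that φ([x]) = [(P^T)^{-1} x] for all x ∈ ℤ³. Equivalently, the boundary automorphism set bAut(ℤ³, [Q₃]) is trivial. -/
open Matrix

noncomputable section

/-!
The form `8 A₃⁻¹` is the Gram matrix of a basis of the lattice `D₃*`, with squared lengths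
`3, 4, 4`. In `D₃*` the sublattice `A₃ℤ³` becomes `4 D₃`, the vectors `4k` with `∑ kᵢ` even, and
`16 ∂θ` is the squared length modulo `16`. By polarization a homomorphism preserving `∂θ` also
preserves `8 ∂λ`, the scalar product modulo `8`. A class whose squared length is `3` or `4` modulo
`16` contains a vector of squared length exactly `3` or `4`, so the images of the basis classes lift
to vectors as long as the basis vectors. The scalar products of these short lifts are at most `4` in
absolute value and known modulo `8`, hence equal those of the basis. The lifts are therefore the
columns of an isometry `N` of `A₃⁻¹`, and `P = (N⁻¹)ᵀ`.
-/

section Congruence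

variable {ι : Type*}

lemma coe_intCast_div_eq_iff_modEq {𝕜 : Type*} [Field 𝕜] [CharZero 𝕜] {a b m : ℤ} (hm : m ≠ 0) :
    ((a / m : 𝕜) : 𝕜 ⧸ AddSubgroup.zmultiples (1 : 𝕜)) = (b / m : 𝕜) ↔ a ≡ b [ZMOD m] := by
  rw [← AddCommGroup.modEq_iff_eq_mod_zmultiples,
    AddCommGroup.div_modEq_div (Int.cast_ne_zero.mpr hm), one_mul,
    AddCommGroup.intCast_modEq_intCast, AddCommGroup.modEq_iff_intModEq]

lemma exists_sub_four_mul_mul_self_eq_one {a : ℤ} (ha : Odd a) :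
    ∃ k : ℤ, (a - 4 * k) * (a - 4 * k) = 1 ∧ a * a ≡ 1 + 8 * k [ZMOD 16] := by
  obtain ⟨b, rfl⟩ := ha
  obtain ⟨m, rfl | rfl⟩ := Int.even_or_odd' b
  · exact ⟨m, by ring, Int.modEq_iff_dvd.mpr ⟨-m ^ 2, by ring⟩⟩
  · exact ⟨m + 1, by ring, Int.modEq_iff_dvd.mpr ⟨-m ^ 2 - m, by ring⟩⟩

variable [Fintype ι]

lemma dotProduct_add_self {R : Type*} [CommSemiring R] (u v : ι → R) :
    (u + v) ⬝ᵥ (u + v) = u ⬝ᵥ u + 2 * (u ⬝ᵥ v) + v ⬝ᵥ v := by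
  rw [add_dotProduct, dotProduct_add, dotProduct_add, dotProduct_comm v u]
  ring

lemma dotProduct_modEq_of_self_modEq {m : ℤ} {u v u' v' : ι → ℤ}
    (hu : u' ⬝ᵥ u' ≡ u ⬝ᵥ u [ZMOD 2 * m]) (hv : v' ⬝ᵥ v' ≡ v ⬝ᵥ v [ZMOD 2 * m])
    (huv : (u' + v') ⬝ᵥ (u' + v') ≡ (u + v) ⬝ᵥ (u + v) [ZMOD 2 * m]) :
    u' ⬝ᵥ v' ≡ u ⬝ᵥ v [ZMOD m] := by
  rw [dotProduct_add_self, dotProduct_add_self] at huv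
  have h : 2 * (u' ⬝ᵥ v') ≡ 2 * (u ⬝ᵥ v) [ZMOD 2 * m] :=
    hu.add_left_cancel (hv.add_right_cancel huv)
  exact Int.ModEq.mul_left_cancel' two_ne_zero h

lemma two_mul_abs_dotProduct_le {R : Type*} [CommRing R] [LinearOrder R] [IsStrictOrderedRing R]
    (u v : ι → R) : 2 * |u ⬝ᵥ v| ≤ u ⬝ᵥ u + v ⬝ᵥ v := by
  have hnonneg (w : ι → R) : 0 ≤ w ⬝ᵥ w := Finset.sum_nonneg fun i _ => mul_self_nonneg (w i)
  have hadd := hnonneg (u + v)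
  have hsub := hnonneg (u + -v)
  simp only [dotProduct_add_self, dotProduct_neg, neg_dotProduct, neg_neg] at hadd hsub
  rcases abs_cases (u ⬝ᵥ v) with ⟨habs, -⟩ | ⟨habs, -⟩ <;> linarith

lemma dotProduct_eq_of_modEq_of_self_le {u v : ι → ℤ} {r b : ℤ} (hu : u ⬝ᵥ u ≤ r)
    (hv : v ⬝ᵥ v ≤ r) (hb : |b| < r) (huv : u ⬝ᵥ v ≡ b [ZMOD 2 * r]) : u ⬝ᵥ v = b := by
  have hdot : |u ⬝ᵥ v| ≤ r := by linarith [two_mul_abs_dotProduct_le u v]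
  refine sub_eq_zero.mp (Int.eq_zero_of_abs_lt_dvd huv.symm.dvd ?_)
  linarith [abs_sub (u ⬝ᵥ v) b]

lemma exists_even_sum_sub_four_smul {w : ι → ℤ} (hodd : ∀ i, Odd (w i))
    (hw : w ⬝ᵥ w ≡ Fintype.card ι [ZMOD 16]) :
    ∃ k : ι → ℤ, Even (∑ i, k i) ∧
      (w - (4 : ℤ) • k) ⬝ᵥ (w - (4 : ℤ) • k) = Fintype.card ι := by
  choose k hk hmod using fun i => exists_sub_four_mul_mul_self_eq_one (hodd i)
  refine ⟨k, ?_, ?_⟩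
  · -- Passing from `w` to the sign vector `w - 4k` changes the squared length by `8 ∑ kᵢ` mod 16.
    have hsum : w ⬝ᵥ w ≡ ∑ i, (1 + 8 * k i) [ZMOD 16] := Int.ModEq.sum fun i _ => hmod i
    have hcard : (Fintype.card ι : ℤ) ≡ Fintype.card ι + 8 * ∑ i, k i [ZMOD 16] := by
      simpa [Finset.sum_add_distrib, Finset.mul_sum] using hw.symm.trans hsum
    rw [Int.ModEq] at hcard
    rw [Int.even_iff]
    omega
  · simp [dotProduct, hk]

lemma exists_eq_emod_two_eq_single [DecidableEq ι] (hcard : Fintype.card ι ≤ 4) {u : ι → ℤ}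
    (hu : u ⬝ᵥ u ≡ 1 [ZMOD 4]) : ∃ j, (fun i => u i % 2) = Pi.single j 1 := by
  have hmod (a : ℤ) : a * a ≡ if Odd a then 1 else 0 [ZMOD 4] := by
    split_ifs with ha
    · simpa [sq, Int.ModEq] using Int.sq_mod_four_eq_one_of_odd ha
    · obtain ⟨b, rfl⟩ := Int.not_odd_iff_even.mp ha
      exact Int.modEq_zero_iff_dvd.mpr ⟨b * b, by ring⟩
  let S : Finset ι := {i | Odd (u i)}
  have hS : (S.card : ℤ) ≡ 1 [ZMOD 4] := by
    have hsum : u ⬝ᵥ u ≡ ∑ i, if Odd (u i) then 1 else 0 [ZMOD 4] :=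
      Int.ModEq.sum fun i _ => hmod (u i)
    rw [Finset.sum_boole] at hsum
    exact hsum.symm.trans hu
  have hS_le : S.card ≤ 4 := S.card_le_univ.trans hcard
  obtain ⟨j, hj⟩ : ∃ j, S = {j} := Finset.card_eq_one.mp (by rw [Int.ModEq] at hS; omega)
  have hodd (i : ι) : Odd (u i) ↔ i = j := by simpa [S] using Finset.ext_iff.mp hj i
  refine ⟨j, funext fun i => ?_⟩
  rw [Pi.single_apply]
  split_ifs with hi
  · exact Int.odd_iff.mp ((hodd i).mpr hi)
  · exact Int.even_iff.mp (Int.not_odd_iff_even.mp (mt (hodd i).mp hi))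

lemma exists_even_sum_sub_two_smul (hcard : Fintype.card ι ≤ 4) {u : ι → ℤ}
    (hu : u ⬝ᵥ u ≡ 1 [ZMOD 4]) :
    ∃ k : ι → ℤ, Even (∑ i, k i) ∧ (u - (2 : ℤ) • k) ⬝ᵥ (u - (2 : ℤ) • k) = 1 := by
  classical
  obtain ⟨j, hj⟩ := exists_eq_emod_two_eq_single hcard hu
  have hdiv : u - (2 : ℤ) • (fun i => u i / 2) = Pi.single j 1 := by
    rw [← hj]
    exact funext fun i => (Int.emod_def (u i) 2).symm
  rcases Int.even_or_odd (∑ i, u i / 2) with heven | hodd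
  · exact ⟨fun i => u i / 2, heven, by rw [hdiv]; simp⟩
  · -- The remainder `-eⱼ` in place of `eⱼ` corrects the parity.
    refine ⟨(fun i => u i / 2) + Pi.single j 1, ?_, ?_⟩
    · simpa [Finset.sum_add_distrib] using hodd.add_one
    · rw [smul_add, ← sub_sub, hdiv]
      simp [two_smul]

end Congruence

section Isometry

variable {n R : Type*} [Fintype n] [CommRing R]

lemma transpose_mul_transpose_mul_mul_apply {m o : Type*} [Fintype m] (F : Matrix m n R)
    (N : Matrix n o R) (i j : o) :
    (Nᵀ * (Fᵀ * F) * N) i j = F *ᵥ N.col i ⬝ᵥ F *ᵥ N.col j := by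
  have hmul : Nᵀ * (Fᵀ * F) * N = (F * N)ᵀ * (F * N) := by
    simp only [transpose_mul, Matrix.mul_assoc]
  rw [hmul]
  rfl

variable [DecidableEq n] {A C N : Matrix n n R}

lemma inv_mul_mul_transpose_inv_eq_of_mul_mul_transpose_eq (hN : IsUnit N.det)
    (hA : N * A * Nᵀ = A) : N⁻¹ * A * N⁻¹ᵀ = A := by
  have hNt : IsUnit Nᵀ.det := by rwa [det_transpose]
  calc N⁻¹ * A * N⁻¹ᵀ = N⁻¹ * (N * A * Nᵀ) * Nᵀ⁻¹ := by rw [hA, transpose_nonsing_inv]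
    _ = A := by
        rw [Matrix.mul_assoc N, nonsing_inv_mul_cancel_left _ _ hN,
          mul_nonsing_inv_cancel_right _ _ hNt]

variable [IsDomain R]

lemma isUnit_det_of_transpose_mul_mul_eq_s15 (hC : C.det ≠ 0) (hN : Nᵀ * C * N = C) :
    IsUnit N.det := by
  refine IsUnit.of_mul_eq_one N.det (mul_right_cancel₀ hC ?_)
  calc N.det * N.det * C.det = (Nᵀ * C * N).det := by
        rw [det_mul, det_mul, det_transpose]; ring
    _ = 1 * C.det := by rw [hN, one_mul]

lemma mul_mul_transpose_eq_of_transpose_mul_mul_eq {k : R} (hC : C.det ≠ 0)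
    (hAC : A * C = k • (1 : Matrix n n R)) (hN : Nᵀ * C * N = C) : N * A * Nᵀ = A := by
  have hdet : (C * N).det ≠ 0 := by
    rw [det_mul]
    exact mul_ne_zero hC (isUnit_det_of_transpose_mul_mul_eq_s15 hC hN).ne_zero
  refine (isRegular_of_isLeftRegular_det (IsRegular.of_ne_zero hdet).left).right ?_
  calc N * A * Nᵀ * (C * N) = N * (A * (Nᵀ * C * N)) := by simp only [Matrix.mul_assoc]
    _ = A * C * N := by rw [hN, hAC, Matrix.mul_smul, Matrix.smul_mul, Matrix.mul_one,
        Matrix.one_mul]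
    _ = A * (C * N) := Matrix.mul_assoc A C N

end Isometry

section Cokernel

variable {h : ℕ}

lemma ckMk_sub_Amat_mulVec (x z : Fin h → ℤ) : ckMk (x - Amat h *ᵥ z) = ckMk x :=
  (Submodule.Quotient.eq _).mpr ⟨-z, by simp [mulVec_neg]⟩

lemma ckMk_add (x y : Fin h → ℤ) : ckMk (x + y) = ckMk x + ckMk y :=
  Submodule.Quotient.mk_add _

lemma ckMk_surjective : Function.Surjective (ckMk : (Fin h → ℤ) → Coker h) :=
  Submodule.Quotient.mk_surjective _

lemma map_ckMk_eq_ckMk_mulVec (φ : Coker h →+ Coker h) {N : Matrix (Fin h) (Fin h) ℤ}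
    (hN : ∀ j, φ (ckMk (Pi.single j 1)) = ckMk (N.col j)) (x : Fin h → ℤ) :
    φ (ckMk x) = ckMk (N *ᵥ x) := by
  let π := (LinearMap.range (Amat h).mulVecLin).mkQ
  have hcomp : φ.toIntLinearMap ∘ₗ π = π ∘ₗ N.mulVecLin :=
    (Pi.basisFun ℤ (Fin h)).ext fun j => by simpa [π, ckMk] using hN j
  exact LinearMap.congr_fun hcomp x

lemma quadR_eq_half (hA : IsUnit (AmatQ h).det) (x : Fin h → ℤ) :
    quadR h x = ((ratVec x ⬝ᵥ (AmatQ h)⁻¹ *ᵥ ratVec x / 2 : ℚ) : AddCircle (1 : ℚ)) := by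
  set v := (AmatQ h)⁻¹ *ᵥ ratVec x with hv
  have hsymm : (AmatQ h)ᵀ = AmatQ h := by
    rw [AmatQ, ← transpose_map, Amat, transpose_add, transpose_transpose, add_comm]
  have hinv : (AmatQ h)⁻¹ᵀ = (AmatQ h)⁻¹ := by rw [transpose_nonsing_inv, hsymm]
  have hsum : AmatQ h = QmatQ h + (QmatQ h)ᵀ := by ext; simp [AmatQ, Amat, QmatQ]
  have hform : ratVec x ⬝ᵥ ((AmatQ h)⁻¹ * QmatQ h * (AmatQ h)⁻¹) *ᵥ ratVec x =
      v ⬝ᵥ QmatQ h *ᵥ v := by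
    rw [← mulVec_mulVec, ← mulVec_mulVec, ← hv, dotProduct_mulVec, ← mulVec_transpose, hinv, hv]
  have hhalf : 2 * (v ⬝ᵥ QmatQ h *ᵥ v) = ratVec x ⬝ᵥ v := by
    calc 2 * (v ⬝ᵥ QmatQ h *ᵥ v) = v ⬝ᵥ AmatQ h *ᵥ v := by
          rw [hsum, add_mulVec, dotProduct_add, dotProduct_transpose_mulVec, two_mul]
      _ = ratVec x ⬝ᵥ v := by
          rw [hv, mulVec_mulVec, mul_nonsing_inv _ hA, one_mulVec, dotProduct_comm]
  rw [quadR, hform, ← hhalf, mul_div_cancel_left₀ _ two_ne_zero]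

lemma quadR_eq_div_of_Amat_mul_eq_smul_one {C : Matrix (Fin h) (Fin h) ℤ} {k : ℤ} (hk : k ≠ 0)
    (hC : Amat h * C = k • (1 : Matrix (Fin h) (Fin h) ℤ)) (x : Fin h → ℤ) :
    quadR h x = (((x ⬝ᵥ C *ᵥ x : ℤ) / (2 * k : ℤ) : ℚ) : AddCircle (1 : ℚ)) := by
  have hkQ : (k : ℚ) ≠ 0 := Int.cast_ne_zero.mpr hk
  have hCQ : AmatQ h * C.map Int.cast = (k : ℚ) • (1 : Matrix (Fin h) (Fin h) ℚ) := by
    rw [AmatQ, ← Matrix.map_mul_intCast, hC]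
    ext i j
    rw [map_apply, Matrix.smul_apply, Matrix.smul_apply, one_apply, one_apply]
    split_ifs <;> simp
  have hright : AmatQ h * ((k : ℚ)⁻¹ • C.map Int.cast) = 1 := by
    rw [Matrix.mul_smul, hCQ, smul_smul, inv_mul_cancel₀ hkQ, one_smul]
  have hcast : ratVec x ⬝ᵥ C.map Int.cast *ᵥ ratVec x = ((x ⬝ᵥ C *ᵥ x : ℤ) : ℚ) := by
    simp [dotProduct, mulVec, ratVec]
  rw [quadR_eq_half (isUnit_det_of_right_inverse hright), inv_eq_right_inv hright, smul_mulVec,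
    dotProduct_smul, hcast]
  congr 1
  push_cast
  rw [smul_eq_mul]
  field_simp

end Cokernel

/-- A matrix with Gram matrix `8 A₃⁻¹`. Its columns are a basis of the lattice `D₃*` of integer
vectors whose entries have equal parity, so that multiplication by it identifies `ℤ³`, with the form
`8 A₃⁻¹`, with `D₃*` inside the standard Euclidean lattice. -/
def cubicFrame : Matrix (Fin 3) (Fin 3) ℤ := !![1, -2, 0; 1, 0, -2; 1, 0, 0]

lemma cubicFrame_mulVec (x : Fin 3 → ℤ) :
    cubicFrame *ᵥ x = ![x 0 - 2 * x 1, x 0 - 2 * x 2, x 0] := by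
  ext i
  fin_cases i <;> simp [cubicFrame, mulVec, dotProduct, Fin.sum_univ_three] <;> ring

lemma Amat_three : Amat 3 = !![8, 4, 4; 4, 4, 2; 4, 2, 4] := by
  decide

lemma cubicFrame_gram : cubicFrameᵀ * cubicFrame = !![3, -2, -2; -2, 4, 0; -2, 0, 4] := by
  decide

lemma Amat_mul_cubicFrame_gram :
    Amat 3 * (cubicFrameᵀ * cubicFrame) = (8 : ℤ) • (1 : Matrix (Fin 3) (Fin 3) ℤ) := by
  decide

lemma even_cubicFrame_mulVec_iff (x : Fin 3 → ℤ) (i : Fin 3) :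
    Even ((cubicFrame *ᵥ x) i) ↔ Even (x 0) := by
  rw [cubicFrame_mulVec]
  fin_cases i <;> simp [Int.even_sub]

lemma even_cubicFrame_mulVec_dotProduct_self_iff (x : Fin 3 → ℤ) :
    Even (cubicFrame *ᵥ x ⬝ᵥ cubicFrame *ᵥ x) ↔ Even (x 0) := by
  simp [dotProduct, Fin.sum_univ_three, Int.even_add, Int.even_mul, even_cubicFrame_mulVec_iff]

lemma exists_ckMk_eq_cubicFrame_mulVec_sub (x : Fin 3 → ℤ) {k : Fin 3 → ℤ}
    (hk : Even (∑ i, k i)) :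
    ∃ y, (ckMk y : Coker 3) = ckMk x ∧ cubicFrame *ᵥ y = cubicFrame *ᵥ x - (4 : ℤ) • k := by
  obtain ⟨m, hm⟩ := even_iff_two_dvd.mp hk
  rw [Fin.sum_univ_three] at hm
  have hz : cubicFrame *ᵥ Amat 3 *ᵥ ![m, -k 0, -k 1] = (4 : ℤ) • k := by
    rw [cubicFrame_mulVec, Amat_three]
    ext i
    fin_cases i <;> simp [mulVec, dotProduct, Fin.sum_univ_three] <;> linarith
  exact ⟨x - Amat 3 *ᵥ ![m, -k 0, -k 1], ckMk_sub_Amat_mulVec x _, by rw [mulVec_sub, hz]⟩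

lemma exists_ckMk_eq_dotProduct_self_eq_three {x : Fin 3 → ℤ}
    (hx : cubicFrame *ᵥ x ⬝ᵥ cubicFrame *ᵥ x ≡ 3 [ZMOD 16]) :
    ∃ y, (ckMk y : Coker 3) = ckMk x ∧ cubicFrame *ᵥ y ⬝ᵥ cubicFrame *ᵥ y = 3 := by
  have hodd (i : Fin 3) : Odd ((cubicFrame *ᵥ x) i) := by
    rw [← Int.not_even_iff_odd, even_cubicFrame_mulVec_iff,
      ← even_cubicFrame_mulVec_dotProduct_self_iff, Int.even_iff]
    rw [Int.ModEq] at hx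
    omega
  obtain ⟨k, hk, hnorm⟩ := exists_even_sum_sub_four_smul hodd (by simpa using hx)
  obtain ⟨y, hyx, hy⟩ := exists_ckMk_eq_cubicFrame_mulVec_sub x hk
  exact ⟨y, hyx, by simpa [hy] using hnorm⟩

lemma exists_ckMk_eq_dotProduct_self_eq_four {x : Fin 3 → ℤ}
    (hx : cubicFrame *ᵥ x ⬝ᵥ cubicFrame *ᵥ x ≡ 4 [ZMOD 16]) :
    ∃ y, (ckMk y : Coker 3) = ckMk x ∧ cubicFrame *ᵥ y ⬝ᵥ cubicFrame *ᵥ y = 4 := by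
  have heven (i : Fin 3) : Even ((cubicFrame *ᵥ x) i) := by
    rw [even_cubicFrame_mulVec_iff, ← even_cubicFrame_mulVec_dotProduct_self_iff, Int.even_iff]
    rw [Int.ModEq] at hx
    omega
  choose u hu using fun i => even_iff_two_dvd.mp (heven i)
  have hxu : cubicFrame *ᵥ x = (2 : ℤ) • u := funext hu
  have hu_norm : u ⬝ᵥ u ≡ 1 [ZMOD 4] := by
    simp only [hxu, smul_dotProduct, dotProduct_smul, smul_eq_mul, Int.ModEq] at hx ⊢
    omega
  obtain ⟨k, hk, hnorm⟩ := exists_even_sum_sub_two_smul (by simp) hu_norm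
  obtain ⟨y, hyx, hy⟩ := exists_ckMk_eq_cubicFrame_mulVec_sub x hk
  have hy_eq : cubicFrame *ᵥ y = (2 : ℤ) • (u - (2 : ℤ) • k) := by
    rw [hy, hxu, smul_sub, smul_smul]; norm_num
  exact ⟨y, hyx, by rw [hy_eq, smul_dotProduct, dotProduct_smul, hnorm]; norm_num⟩

lemma quadR_three_eq_iff (x y : Fin 3 → ℤ) :
    quadR 3 x = quadR 3 y ↔
      cubicFrame *ᵥ x ⬝ᵥ cubicFrame *ᵥ x ≡ cubicFrame *ᵥ y ⬝ᵥ cubicFrame *ᵥ y [ZMOD 16] := by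
  have hgram (z : Fin 3 → ℤ) :
      z ⬝ᵥ (cubicFrameᵀ * cubicFrame) *ᵥ z = cubicFrame *ᵥ z ⬝ᵥ cubicFrame *ᵥ z := by
    rw [← mulVec_mulVec, dotProduct_transpose_mulVec]
  rw [quadR_eq_div_of_Amat_mul_eq_smul_one (by norm_num) Amat_mul_cubicFrame_gram,
    quadR_eq_div_of_Amat_mul_eq_smul_one (by norm_num) Amat_mul_cubicFrame_gram, hgram, hgram]
  exact coe_intCast_div_eq_iff_modEq (by norm_num)

section Lift

variable {φ : Coker 3 →+ Coker 3}
  (hquad : ∀ x x' : Fin 3 → ℤ, ckMk x' = φ (ckMk x) → quadR 3 x' = quadR 3 x)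

include hquad

lemma dotProduct_modEq_of_ckMk_eq_map {x y x' y' : Fin 3 → ℤ} (hx : ckMk x' = φ (ckMk x))
    (hy : ckMk y' = φ (ckMk y)) :
    cubicFrame *ᵥ x' ⬝ᵥ cubicFrame *ᵥ y' ≡ cubicFrame *ᵥ x ⬝ᵥ cubicFrame *ᵥ y [ZMOD 8] := by
  have hself {z z' : Fin 3 → ℤ} (hz : ckMk z' = φ (ckMk z)) :=
    (quadR_three_eq_iff z' z).mp (hquad z z' hz)
  have hxy : ckMk (x' + y') = φ (ckMk (x + y)) := by
    rw [ckMk_add, ckMk_add, map_add, hx, hy]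
  have hadd := hself hxy
  rw [mulVec_add, mulVec_add] at hadd
  exact dotProduct_modEq_of_self_modEq (hself hx) (hself hy) hadd

lemma exists_ckMk_eq_map_single_and_dotProduct_self_eq (j : Fin 3) :
    ∃ y, ckMk y = φ (ckMk (Pi.single j 1)) ∧
      cubicFrame *ᵥ y ⬝ᵥ cubicFrame *ᵥ y = (cubicFrameᵀ * cubicFrame) j j := by
  obtain ⟨x, hx⟩ := ckMk_surjective (φ (ckMk (Pi.single j 1)))
  have hnorm : cubicFrame *ᵥ x ⬝ᵥ cubicFrame *ᵥ x ≡ (cubicFrameᵀ * cubicFrame) j j [ZMOD 16] := by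
    simpa [mul_apply, dotProduct] using (quadR_three_eq_iff _ _).mp (hquad _ _ hx)
  rw [← hx]
  rw [cubicFrame_gram] at hnorm ⊢
  fin_cases j
  · exact exists_ckMk_eq_dotProduct_self_eq_three hnorm
  · exact exists_ckMk_eq_dotProduct_self_eq_four hnorm
  · exact exists_ckMk_eq_dotProduct_self_eq_four hnorm

lemma exists_lift_transpose_mul_gram_mul_eq :
    ∃ N : Matrix (Fin 3) (Fin 3) ℤ,
      Nᵀ * (cubicFrameᵀ * cubicFrame) * N = cubicFrameᵀ * cubicFrame ∧
      ∀ j, φ (ckMk (Pi.single j 1)) = ckMk (N.col j) := by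
  choose y hy hnorm using exists_ckMk_eq_map_single_and_dotProduct_self_eq hquad
  refine ⟨(Matrix.of y)ᵀ, ?_, fun j => (hy j).symm⟩
  ext i j
  rw [transpose_mul_transpose_mul_mul_apply]
  change cubicFrame *ᵥ y i ⬝ᵥ cubicFrame *ᵥ y j = _
  obtain rfl | hij := eq_or_ne i j
  · exact hnorm i
  have hnorm_le (l : Fin 3) : cubicFrame *ᵥ y l ⬝ᵥ cubicFrame *ᵥ y l ≤ 4 := by
    rw [hnorm, cubicFrame_gram]
    fin_cases l <;> decide
  have hgram_lt : |(cubicFrameᵀ * cubicFrame) i j| < 4 := by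
    rw [cubicFrame_gram]
    revert i j
    decide
  have hmod : cubicFrame *ᵥ y i ⬝ᵥ cubicFrame *ᵥ y j ≡ (cubicFrameᵀ * cubicFrame) i j [ZMOD 8] := by
    simpa [mul_apply, dotProduct] using dotProduct_modEq_of_ckMk_eq_map hquad (hy i) (hy j)
  exact dotProduct_eq_of_modEq_of_self_le (hnorm_le i) (hnorm_le j) hgram_lt hmod

end Lift

theorem boundary_map_surjective_h3_general (φ : Coker 3 →+ Coker 3)
    (hquad : ∀ x x' : Fin 3 → ℤ, ckMk x' = φ (ckMk x) → quadR 3 x' = quadR 3 x) :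
    ∃ P : Matrix (Fin 3) (Fin 3) ℤ, IsUnit P.det ∧ Pᵀ * Amat 3 * P = Amat 3 ∧
      ∀ x : Fin 3 → ℤ, φ (ckMk x) = ckMk ((Pᵀ)⁻¹ *ᵥ x) := by
  obtain ⟨N, hN, hφ⟩ := exists_lift_transpose_mul_gram_mul_eq hquad
  have hdet : (cubicFrameᵀ * cubicFrame).det ≠ 0 := by
    rw [cubicFrame_gram]
    decide
  have hunit : IsUnit N.det := isUnit_det_of_transpose_mul_mul_eq_s15 hdet hN
  have hA : N * Amat 3 * Nᵀ = Amat 3 :=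
    mul_mul_transpose_eq_of_transpose_mul_mul_eq hdet Amat_mul_cubicFrame_gram hN
  refine ⟨N⁻¹ᵀ, ?_, ?_, fun x => ?_⟩
  · rw [det_transpose]
    exact isUnit_nonsing_inv_det N hunit
  · rw [transpose_transpose]
    exact inv_mul_mul_transpose_inv_eq_of_mul_mul_transpose_eq hunit hA
  · rw [transpose_transpose, nonsing_inv_nonsing_inv N hunit]
    exact map_ckMk_eq_ckMk_mulVec φ hφ x

/-- For h = 3, every group automorphism of ℤ^3/A_3 ℤ^3 preserving the boundary linking
form ∂λ and the boundary quadratic form ∂θ is induced, via [x] ↦ [(Pᵀ)⁻¹ x], by an isometry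
P ∈ GL_3(ℤ) of A_3; i.e. the boundary map ∂ is surjective and bAut(ℤ^3, [Q_3]) is
trivial. -/
theorem boundary_map_surjective_h3 (φ : Coker 3 ≃+ Coker 3)
    (hlink : ∀ x y x' y' : Fin 3 → ℤ, ckMk x' = φ (ckMk x) → ckMk y' = φ (ckMk y) →
      linkR 3 x' y' = linkR 3 x y)
    (hquad : ∀ x x' : Fin 3 → ℤ, ckMk x' = φ (ckMk x) → quadR 3 x' = quadR 3 x) :
    ∃ P : Matrix (Fin 3) (Fin 3) ℤ, IsUnit P.det ∧ Pᵀ * Amat 3 * P = Amat 3 ∧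
      ∀ x : Fin 3 → ℤ, φ (ckMk x) = ckMk ((Pᵀ)⁻¹ *ᵥ x) := by
  exact boundary_map_surjective_h3_general φ.toAddMonoidHom hquad
end
end
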